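/- arXiv:1012.3541 — 2 statements merged into one kernel-verified Lean document; each statement's English description precedes it below -/
import Mathlib

section
/- Let P be a simple closed 5-gon in ℝ². Then the closed region cl(int P) = P ∪ int P is star-shaped with respect to some vertex of P; equivalently, there is a vertex q of P such that for every x ∈ P ∪ int P the segment [q,x] is contained in P ∪ int P. -/
open Set Metric

abbrev Plane := EuclideanSpace ℝ (Fin 2)

/-- The `i`-th edge of the closed polygon with vertex cycle `p`. -/
def polyEdge {n : ℕ} (p : ZMod n → Plane) (i : ZMod n) : Set Plane :=
  segment ℝ (p i) (p (i + 1))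

/-- The union of the edges of the closed polygon with vertex cycle `p`. -/
def polyBody {n : ℕ} (p : ZMod n → Plane) : Set Plane :=
  ⋃ i, polyEdge p i

/-- `p` is the vertex cycle of a simple closed `n`-gon: distinct vertices,
consecutive edges meet exactly in their common endpoint, non-consecutive edges
are disjoint. -/
structure IsSimplePolygon {n : ℕ} (p : ZMod n → Plane) : Prop where
  three_le : 3 ≤ n
  inj : Function.Injective p
  consec : ∀ i : ZMod n, polyEdge p i ∩ polyEdge p (i + 1) = {p (i + 1)}
  nonconsec : ∀ i j : ZMod n, j ≠ i → j ≠ i + 1 → i ≠ j + 1 →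
    polyEdge p i ∩ polyEdge p j = ∅

/-- The union of the bounded connected components of the complement of `P`
(the Jordan interior of `P`). -/
def intP (P : Set Plane) : Set Plane :=
  {x | x ∉ P ∧ Bornology.IsBounded (connectedComponentIn Pᶜ x)}

/-- The union of the unbounded connected components of the complement of `P`
(the Jordan exterior of `P`). -/
def extP (P : Set Plane) : Set Plane :=
  {x | x ∉ P ∧ ¬ Bornology.IsBounded (connectedComponentIn Pᶜ x)}

/-- There is a polygonal path of `k` segments from `a` to `b` inside `S`. -/
def PolyPath (S : Set Plane) (a b : Plane) (k : ℕ) : Prop :=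
  ∃ x : Fin (k + 1) → Plane, x 0 = a ∧ x (Fin.last k) = b ∧
    ∀ i : Fin k, segment ℝ (x i.castSucc) (x i.succ) ⊆ S

/-- The minimal number of segments of a polygonal path from `a` to `b` in `S`. -/
noncomputable def polyDist (S : Set Plane) (a b : Plane) : ℕ :=
  sInf {k | PolyPath S a b k}

/-!
Call a vertex a fan vertex if it spans triangles of the same strict orientation with all edges not
through it. The union of these triangles is star-shaped about the vertex, contains the polygon, and
its frontier lies on the polygon, so it is the closed region bounded by the polygon.

A simple pentagon has a fan vertex by a sign argument on the turns at the vertices and on the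
orientations of the triangles spanned by an edge and the opposite vertex: disjointness of two
nonadjacent edges relates these signs, and so do the Grassmann–Plücker relations. If a vertex is
flat, one of the two vertices not adjacent to it is a fan vertex. Otherwise, up to a rotation,
either the turns at the vertices `0, 1, 3` have the same sign and `2` or `4` is a fan vertex, or
exactly `2` and `3` have the minority sign and `0` is a fan vertex.
-/

/-! ### Orientation of triples of points -/

/-- Twice the signed area of the triangle `a b c`; positive when `a b c` is a left turn. -/
def orient (a b c : Plane) : ℝ :=
  (b 0 - a 0) * (c 1 - a 1) - (b 1 - a 1) * (c 0 - a 0)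

section Orient

variable {a b c d : Plane}

lemma plane_ext (h₀ : a 0 = b 0) (h₁ : a 1 = b 1) : a = b := by
  ext i
  fin_cases i
  exacts [h₀, h₁]

lemma orient_rotate (a b c : Plane) : orient b c a = orient a b c := by
  simp only [orient]; ring

lemma orient_swap (a b c : Plane) : orient a c b = -orient a b c := by
  simp only [orient]; ring

lemma orient_self_left (a b : Plane) : orient a b a = 0 := by simp [orient]

lemma orient_self_right (a b : Plane) : orient a b b = 0 := by simp only [orient]; ring

lemma orient_add_orient (a b c d : Plane) :
    orient b c d + orient c a d + orient a b d = orient a b c := by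
  simp only [orient]; ring

lemma orient_mul_orient (q a b c d : Plane) :
    orient q a b * orient q c d + orient q a d * orient q b c = orient q a c * orient q b d := by
  simp only [orient]; ring

/-- Cramer's rule: barycentric coordinates are ratios of oriented areas. -/
lemma orient_smul_eq (a b c x : Plane) :
    orient a b c • x = orient b c x • a + orient c a x • b + orient a b x • c := by
  apply plane_ext <;>
  · simp only [orient, PiLp.add_apply, PiLp.smul_apply, smul_eq_mul]
    ring

lemma orient_combo (a b : Plane) {s t : ℝ} (hst : s + t = 1) (x y : Plane) :
    orient a b (s • x + t • y) = s * orient a b x + t * orient a b y := by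
  obtain rfl : s = 1 - t := by linarith
  simp only [orient, PiLp.add_apply, PiLp.smul_apply, smul_eq_mul]
  ring

lemma continuous_orient (a b : Plane) : Continuous (orient a b) := by
  unfold orient; fun_prop

lemma convex_setOf_orient_nonneg (a b : Plane) : Convex ℝ {x | 0 ≤ orient a b x} := by
  intro x hx y hy s t hs ht hst
  rw [mem_ofPred_eq] at hx hy ⊢
  rw [orient_combo a b hst]
  positivity

lemma isOpen_setOf_orient_pos (a b : Plane) : IsOpen {x | 0 < orient a b x} :=
  isOpen_lt continuous_const (continuous_orient a b)

lemma mem_segment_of_smul_eq {E : Type*} [AddCommGroup E] [Module ℝ E] {x y z : E} {s t : ℝ}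
    (hs : 0 ≤ s) (ht : 0 ≤ t) (hst : 0 < s + t) (h : (s + t) • x = s • y + t • z) :
    x ∈ segment ℝ y z := by
  refine mem_segment_iff_div.2 ⟨s, t, hs, ht, hst, ?_⟩
  rw [div_eq_inv_mul, div_eq_inv_mul, mul_smul, mul_smul, ← smul_add, ← h,
    inv_smul_smul₀ hst.ne']

lemma inv_smul_sub_mem_segment {E : Type*} [AddCommGroup E] [Module ℝ E] {s t : ℝ}
    (hst : s * t ≤ 0) (hne : s ≠ t) (x y : E) :
    (s - t)⁻¹ • (s • y - t • x) ∈ segment ℝ x y := by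
  have hsub : s - t ≠ 0 := sub_ne_zero.2 hne
  have hsq : 0 < (s - t) ^ 2 := by positivity
  apply mem_segment_of_smul_eq (s := -t * (s - t)) (t := s * (s - t))
  · nlinarith
  · nlinarith
  · linarith
  · rw [← add_mul, neg_add_eq_sub, mul_smul, smul_inv_smul₀ hsub]
    module

lemma collinear_of_orient_eq_zero (h : orient a b c = 0) : Collinear ℝ {a, b, c} := by
  rcases eq_or_ne a b with rfl | hab
  · simpa using collinear_pair ℝ a c
  have hpos : 0 < (b 0 - a 0) ^ 2 + (b 1 - a 1) ^ 2 := by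
    by_contra! hle
    exact hab (plane_ext (by nlinarith) (by nlinarith))
  obtain ⟨t, ht⟩ : ∃ t : ℝ, t * ((b 0 - a 0) ^ 2 + (b 1 - a 1) ^ 2) =
      (c 0 - a 0) * (b 0 - a 0) + (c 1 - a 1) * (b 1 - a 1) := ⟨_, div_mul_cancel₀ _ hpos.ne'⟩
  have hc : c = t • (b - a) + a := by
    apply plane_ext <;> apply mul_left_cancel₀ hpos.ne' <;>
      simp only [orient, PiLp.add_apply, PiLp.sub_apply, PiLp.smul_apply, smul_eq_mul] at h ⊢
    · linear_combination (a 0 - b 0) * ht - (b 1 - a 1) * h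
    · linear_combination (a 1 - b 1) * ht + (b 0 - a 0) * h
  refine (collinear_iff_of_mem (mem_insert a _)).2 ⟨b - a, ?_⟩
  rintro x (rfl | rfl | rfl)
  · exact ⟨0, by simp⟩
  · exact ⟨1, by simp⟩
  · exact ⟨t, hc⟩

lemma sbtw_of_orient_eq_zero (hab : a ≠ b) (hbc : b ≠ c)
    (h : segment ℝ a b ∩ segment ℝ b c = {b}) (h0 : orient a b c = 0) : Sbtw ℝ a b c := by
  rcases (collinear_of_orient_eq_zero h0).wbtw_or_wbtw_or_wbtw with hw | hw | hw
  · exact ⟨hw, hab.symm, hbc⟩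
  · have hc : c ∈ segment ℝ a b ∩ segment ℝ b c :=
      ⟨mem_segment_iff_wbtw.2 hw.symm, right_mem_segment ℝ b c⟩
    rw [h] at hc
    exact absurd hc.symm hbc
  · have ha : a ∈ segment ℝ a b ∩ segment ℝ b c :=
      ⟨left_mem_segment ℝ a b, mem_segment_iff_wbtw.2 hw.symm⟩
    rw [h] at ha
    exact absurd ha hab

lemma exists_orient_eq_mul_of_sbtw (h : Sbtw ℝ a b c) :
    ∃ r s : ℝ, 0 < r ∧ 0 < s ∧
      ∀ x, orient a b x = r * orient a c x ∧ orient b c x = s * orient a c x := by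
  obtain ⟨r, ⟨hr₀, hr₁⟩, rfl⟩ := (sbtw_iff_mem_image_Ioo_and_ne.1 h).1
  refine ⟨r, 1 - r, hr₀, sub_pos.2 hr₁, fun x => ?_⟩
  constructor <;>
  · simp only [orient, AffineMap.lineMap_apply, vsub_eq_sub, vadd_eq_add, PiLp.add_apply,
      PiLp.smul_apply, PiLp.sub_apply, smul_eq_mul]
    ring

/-- If the endpoints of each segment were weakly separated by the line through the other one, the
segments would meet in the Radon point of `a b c d`, unless all four points are collinear. -/
lemma orient_of_disjoint_segments (h : segment ℝ a b ∩ segment ℝ c d = ∅) :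
    0 < orient a b c * orient a b d ∨ 0 < orient b c d * orient c d a ∨
      orient a b c = 0 ∧ orient a b d = 0 ∧ orient b c d = 0 ∧ orient c d a = 0 := by
  by_contra! ⟨hcd, hab, hne⟩
  have hsub : orient c d a - orient b c d = -(orient a b c - orient a b d) := by
    simp only [orient]; ring
  have hdiff : orient a b c ≠ orient a b d := fun h0 =>
    hne (by nlinarith) (by nlinarith) (by nlinarith) (by nlinarith)
  have hdiff' : orient c d a ≠ orient b c d := by
    rw [← sub_ne_zero, hsub, neg_ne_zero]
    exact sub_ne_zero.2 hdiff
  have hradon : orient c d a • b - orient b c d • a =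
      -(orient a b c • d - orient a b d • c) := by
    apply plane_ext <;>
    · simp only [orient, PiLp.sub_apply, PiLp.neg_apply, PiLp.smul_apply, smul_eq_mul]
      ring
  have hmem_cd := inv_smul_sub_mem_segment hcd hdiff c d
  have hmem_ab := inv_smul_sub_mem_segment (mul_comm (orient b c d) _ ▸ hab) hdiff' a b
  rw [hsub, hradon, inv_neg, neg_smul_neg] at hmem_ab
  exact h.le ⟨hmem_ab, hmem_cd⟩

end Orient

/-! ### Triangles -/

section Triangle

variable {a b c q x : Plane}

lemma mem_convexHull_triple_iff (h : 0 < orient a b c) :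
    x ∈ convexHull ℝ {a, b, c} ↔ 0 ≤ orient a b x ∧ 0 ≤ orient b c x ∧ 0 ≤ orient c a x := by
  constructor
  · have hconv : Convex ℝ
        ({x | 0 ≤ orient a b x} ∩ ({x | 0 ≤ orient b c x} ∩ {x | 0 ≤ orient c a x})) :=
      (convex_setOf_orient_nonneg a b).inter
        ((convex_setOf_orient_nonneg b c).inter (convex_setOf_orient_nonneg c a))
    refine fun hx => convexHull_min ?_ hconv hx
    have hbca : 0 ≤ orient b c a := by rw [orient_rotate]; exact h.le
    have hcab : 0 ≤ orient c a b := by rw [orient_rotate b c a]; exact hbca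
    rintro y (rfl | rfl | rfl) <;>
      simp [orient_self_left, orient_self_right, h.le, hbca, hcab]
  · rintro ⟨hab, hbc, hca⟩
    have hsum := orient_add_orient a b c x
    have hx : x = ∑ i, ![orient b c x / orient a b c, orient c a x / orient a b c,
        orient a b x / orient a b c] i • ![a, b, c] i := by
      simp only [Fin.sum_univ_three, Matrix.cons_val, div_eq_inv_mul, mul_smul, ← smul_add]
      rw [← orient_smul_eq, inv_smul_smul₀ h.ne']
    rw [hx]
    refine (convex_convexHull ℝ _).sum_mem (fun i _ => ?_) ?_ fun i _ => subset_convexHull ℝ _ ?_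
    · fin_cases i
      exacts [div_nonneg hbc h.le, div_nonneg hca h.le, div_nonneg hab h.le]
    · simp only [Fin.sum_univ_three, Matrix.cons_val]
      rw [← add_div, ← add_div, hsum, div_self h.ne']
    · fin_cases i <;> simp

lemma mem_segment_of_mem_convexHull_triple (h : 0 < orient a b c)
    (hx : x ∈ convexHull ℝ {a, b, c}) (h0 : orient a b x = 0) : x ∈ segment ℝ a b := by
  obtain ⟨-, hbc, hca⟩ := (mem_convexHull_triple_iff h).1 hx
  have hsum : orient b c x + orient c a x = orient a b c := by
    rw [← orient_add_orient a b c x, h0, add_zero]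
  apply mem_segment_of_smul_eq hbc hca (hsum ▸ h)
  rw [hsum, orient_smul_eq, h0, zero_smul, add_zero]

lemma mem_interior_convexHull_triple (h : 0 < orient a b c) (hab : 0 < orient a b x)
    (hbc : 0 < orient b c x) (hca : 0 < orient c a x) :
    x ∈ interior (convexHull ℝ {a, b, c}) := by
  refine mem_interior.2 ⟨{x | 0 < orient a b x} ∩ ({x | 0 < orient b c x} ∩ {x | 0 < orient c a x}),
    fun y hy => (mem_convexHull_triple_iff h).2 ⟨hy.1.le, hy.2.1.le, hy.2.2.le⟩, ?_, hab, hbc, hca⟩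
  exact (isOpen_setOf_orient_pos a b).inter
    ((isOpen_setOf_orient_pos b c).inter (isOpen_setOf_orient_pos c a))

lemma mem_interior_union_of_mem_openSegment (habq : 0 < orient q a b) (hbcq : 0 < orient q b c)
    (hx : x ∈ openSegment ℝ q b) :
    x ∈ interior (convexHull ℝ {q, a, b} ∪ convexHull ℝ {q, b, c}) := by
  refine mem_interior.2 ⟨({x | 0 < orient q a x} ∩ {x | 0 < orient a b x}) ∩
    ({x | 0 < orient b c x} ∩ {x | 0 < orient c q x}), ?_, ?_, ?_⟩
  · rintro y ⟨⟨hqa, hab⟩, hbc, hcq⟩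
    have hswap : orient b q y = -orient q b y := by simp only [orient]; ring
    rcases le_total 0 (orient q b y) with hy | hy
    · exact Or.inr ((mem_convexHull_triple_iff hbcq).2 ⟨hy, hbc.le, hcq.le⟩)
    · exact Or.inl ((mem_convexHull_triple_iff habq).2 ⟨hqa.le, hab.le, by linarith⟩)
  · exact ((isOpen_setOf_orient_pos q a).inter (isOpen_setOf_orient_pos a b)).inter
      ((isOpen_setOf_orient_pos b c).inter (isOpen_setOf_orient_pos c q))
  · obtain ⟨s, t, hs, ht, hst, rfl⟩ := hx
    simp only [mem_inter_iff, mem_ofPred_eq, orient_combo _ _ hst, orient_self_left,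
      orient_self_right, mul_zero, add_zero, zero_add, orient_rotate q a b, orient_rotate q b c,
      ← orient_rotate c q b]
    exact ⟨⟨by positivity, by positivity⟩, by positivity, by positivity⟩

end Triangle

/-! ### The region bounded by the frontier of a star-shaped set -/

section Region

variable {P T : Set Plane} {q : Plane}

lemma not_isBounded_image_lineMap_Ici {E : Type*} [NormedAddCommGroup E] [NormedSpace ℝ E]
    {x y : E} (hxy : x ≠ y) (r : ℝ) :
    ¬Bornology.IsBounded (AffineMap.lineMap x y '' Ici r) := fun hb =>
  not_bddAbove_Ici r <| ((antilipschitzWith_lineMap (𝕜 := ℝ) hxy).isBounded_preimage hb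
    |>.subset (subset_preimage_image _ _)).bddAbove

lemma subset_of_isPreconnected_of_disjoint_frontier {X : Type*} [TopologicalSpace X]
    {C S : Set X} (hC : IsPreconnected C) (hdisj : Disjoint C (frontier S))
    (hne : (C ∩ S).Nonempty) : C ⊆ S := by
  have hcover : C ⊆ interior S ∪ (closure S)ᶜ := fun y hy => by
    by_contra! hy'
    simp only [mem_union, mem_compl_iff, not_or, not_not] at hy'
    exact disjoint_left.1 hdisj hy ⟨hy'.2, hy'.1⟩
  obtain ⟨x, hxC, hxS⟩ := hne
  refine (hC.subset_left_of_subset_union isOpen_interior isClosed_closure.isOpen_compl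
    (disjoint_compl_right.mono_left (interior_subset.trans subset_closure)) hcover
    ⟨x, hxC, ?_⟩).trans interior_subset
  exact (hcover hxC).resolve_right (not_not.2 (subset_closure hxS))

lemma intP_subset_of_starConvex (hT : StarConvex ℝ q T) (hq : q ∈ T) (hPT : P ⊆ T) :
    intP P ⊆ T := by
  rintro x ⟨-, hb⟩
  by_contra hxT
  have hqx : q ≠ x := ne_of_mem_of_not_mem hq hxT
  have hray : AffineMap.lineMap q x '' Ici (1 : ℝ) ⊆ connectedComponentIn Pᶜ x := by
    refine (isPreconnected_Ici.image _ (by fun_prop)).subset_connectedComponentIn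
      ⟨1, self_mem_Ici, AffineMap.lineMap_apply_one q x⟩ fun y hy hyP => hxT ?_
    exact hT.segment_subset (hPT hyP) (mem_segment_iff_wbtw.2
      (wbtw_iff_left_eq_or_right_mem_image_Ici.2 (Or.inr hy)))
  exact not_isBounded_image_lineMap_Ici hqx 1 (hb.subset hray)

lemma union_intP_eq_of_starConvex (hT : StarConvex ℝ q T) (hb : Bornology.IsBounded T)
    (hq : q ∈ T) (hPT : P ⊆ T) (hfr : frontier T ⊆ P) : P ∪ intP P = T := by
  refine (union_subset hPT (intP_subset_of_starConvex hT hq hPT)).antisymm fun x hx => ?_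
  refine or_iff_not_imp_left.2 fun hxP => ⟨hxP, hb.subset ?_⟩
  refine subset_of_isPreconnected_of_disjoint_frontier isPreconnected_connectedComponentIn ?_
    ⟨x, mem_connectedComponentIn hxP, hx⟩
  exact disjoint_compl_left_iff_subset.2 hfr |>.mono_left (connectedComponentIn_subset _ _)

end Region

/-! ### Fans -/

/-- The triangles `p i, p j, p (j + 1)` spanned by the vertex `p i` and the edges not through it
are nondegenerate and have the same orientation, namely that given by the sign of `σ`. -/
def IsFanVertex {n : ℕ} (p : ZMod n → Plane) (i : ZMod n) : Prop :=
  ∃ σ : ℝ, ∀ j, j ≠ i → j + 1 ≠ i → 0 < σ * orient (p i) (p j) (p (j + 1))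

/-- The union of the triangles spanned by the vertex `p i` and the edges; for the two edges through
`p i` these are just the edges. -/
def fanRegion {n : ℕ} (p : ZMod n → Plane) (i : ZMod n) : Set Plane :=
  ⋃ j, convexHull ℝ {p i, p j, p (j + 1)}

section Fan

variable {n : ℕ} {p : ZMod n → Plane} {i j : ZMod n} {x : Plane}

lemma vertex_mem_polyBody (p : ZMod n → Plane) (i : ZMod n) : p i ∈ polyBody p :=
  mem_iUnion.2 ⟨i, left_mem_segment ℝ _ _⟩

lemma polyBody_comp_neg (p : ZMod n → Plane) : polyBody (fun i => p (-i)) = polyBody p := by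
  have hedge (i : ZMod n) : polyEdge (fun i => p (-i)) i = polyEdge p (-(i + 1)) := by
    rw [polyEdge, polyEdge, segment_symm, neg_add_rev, neg_add_eq_sub, sub_add_cancel]
  simp only [polyBody, hedge]
  exact ((Equiv.addRight (1 : ZMod n)).trans (Equiv.neg _)).iSup_congr fun _ => rfl

lemma convexHull_subset_fanRegion (p : ZMod n → Plane) (i j : ZMod n) :
    convexHull ℝ {p i, p j, p (j + 1)} ⊆ fanRegion p i :=
  subset_iUnion (fun k => convexHull ℝ {p i, p k, p (k + 1)}) j

lemma polyBody_subset_fanRegion : polyBody p ⊆ fanRegion p i :=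
  iUnion_mono fun j => by
    rw [polyEdge, ← convexHull_pair]
    exact convexHull_mono (subset_insert _ _)

lemma starConvex_fanRegion : StarConvex ℝ (p i) (fanRegion p i) :=
  starConvex_iUnion fun _ => (convex_convexHull ℝ _).starConvex
    (subset_convexHull ℝ _ (mem_insert _ _))

lemma isCompact_fanRegion [NeZero n] : IsCompact (fanRegion p i) :=
  isCompact_iUnion fun _ => (toFinite _).isCompact_convexHull ℝ

lemma mem_interior_fanRegion_of_mem_spoke
    (hpos : ∀ j, j ≠ i → j + 1 ≠ i → 0 < orient (p i) (p j) (p (j + 1)))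
    (hx : x ∈ segment ℝ (p i) (p j)) (hxP : x ∉ polyBody p) :
    x ∈ interior (fanRegion p i) := by
  have hji : j ≠ i := by
    rintro rfl
    rw [segment_same, mem_singleton_iff] at hx
    exact hxP (hx ▸ vertex_mem_polyBody p j)
  have hprev : j - 1 ≠ i := by
    rintro rfl
    exact hxP (mem_iUnion.2 ⟨j - 1, by rwa [polyEdge, sub_add_cancel]⟩)
  have hnext : j + 1 ≠ i := by
    rintro rfl
    exact hxP (mem_iUnion.2 ⟨j, by rwa [polyEdge, segment_symm]⟩)
  have hopen : x ∈ openSegment ℝ (p i) (p j) :=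
    mem_openSegment_of_ne_left_right (ne_of_mem_of_not_mem (vertex_mem_polyBody p i) hxP)
      (ne_of_mem_of_not_mem (vertex_mem_polyBody p j) hxP) hx
  have hpos_prev : 0 < orient (p i) (p (j - 1)) (p j) := by
    simpa only [sub_add_cancel] using hpos (j - 1) hprev (by rwa [sub_add_cancel])
  refine interior_mono (union_subset ?_ ?_)
    (mem_interior_union_of_mem_openSegment hpos_prev (hpos j hji hnext) hopen)
  · simpa only [sub_add_cancel] using convexHull_subset_fanRegion p i (j - 1)
  · exact convexHull_subset_fanRegion p i j

lemma frontier_fanRegion_subset [NeZero n]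
    (hpos : ∀ j, j ≠ i → j + 1 ≠ i → 0 < orient (p i) (p j) (p (j + 1))) :
    frontier (fanRegion p i) ⊆ polyBody p := by
  rw [isCompact_fanRegion.isClosed.frontier_eq]
  rintro x ⟨hx, hxint⟩
  by_contra hxP
  obtain ⟨j, hj⟩ := mem_iUnion.1 hx
  have hspoke (k : ZMod n) : x ∉ segment ℝ (p i) (p k) := fun hk =>
    hxint (mem_interior_fanRegion_of_mem_spoke hpos hk hxP)
  have hji : j ≠ i := by
    rintro rfl
    rw [insert_eq_of_mem (mem_insert _ _), convexHull_pair] at hj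
    exact hspoke _ hj
  have hji' : j + 1 ≠ i := by
    rintro rfl
    rw [pair_comm, insert_eq_of_mem (mem_insert _ _), convexHull_pair] at hj
    exact hspoke _ hj
  have hor := hpos j hji hji'
  obtain ⟨h₁, h₂, h₃⟩ := (mem_convexHull_triple_iff hor).1 hj
  have h₁' : orient (p i) (p j) x ≠ 0 := fun h0 =>
    hspoke j (mem_segment_of_mem_convexHull_triple hor hj h0)
  have h₂' : orient (p j) (p (j + 1)) x ≠ 0 := fun h0 =>
    hxP (mem_iUnion.2 ⟨j, mem_segment_of_mem_convexHull_triple (c := p i)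
      (by rwa [orient_rotate]) (by rwa [pair_comm, insert_comm]) h0⟩)
  have h₃' : orient (p (j + 1)) (p i) x ≠ 0 := fun h0 =>
    hspoke (j + 1) (segment_symm ℝ (p i) _ ▸ mem_segment_of_mem_convexHull_triple (c := p j)
      (by rwa [← orient_rotate]) (by rwa [insert_comm, pair_comm]) h0)
  exact hxint (interior_mono (convexHull_subset_fanRegion p i j)
    (mem_interior_convexHull_triple hor (h₁.lt_of_ne' h₁') (h₂.lt_of_ne' h₂') (h₃.lt_of_ne' h₃')))

lemma starConvex_union_intP_of_orient_pos [NeZero n]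
    (hpos : ∀ j, j ≠ i → j + 1 ≠ i → 0 < orient (p i) (p j) (p (j + 1))) :
    StarConvex ℝ (p i) (polyBody p ∪ intP (polyBody p)) := by
  rw [union_intP_eq_of_starConvex starConvex_fanRegion isCompact_fanRegion.isBounded
    (polyBody_subset_fanRegion (vertex_mem_polyBody p i)) polyBody_subset_fanRegion
    (frontier_fanRegion_subset hpos)]
  exact starConvex_fanRegion

theorem starConvex_union_intP_of_isFanVertex [NeZero n] (h : IsFanVertex p i) :
    StarConvex ℝ (p i) (polyBody p ∪ intP (polyBody p)) := by
  obtain ⟨σ, hσ⟩ := h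
  rcases le_total 0 σ with h0 | h0
  · exact starConvex_union_intP_of_orient_pos fun j hj hj' => pos_of_mul_pos_right (hσ j hj hj') h0
  · have hrev := starConvex_union_intP_of_orient_pos (p := fun j => p (-j)) (i := -i)
      fun j hj hj' => by
        have hneg : -(j + 1) + 1 = -j := by ring
        have hlt := neg_of_mul_pos_right (hσ (-(j + 1)) (fun h => hj' (neg_eq_iff_eq_neg.1 h))
          (fun h => hj (neg_eq_iff_eq_neg.1 (hneg ▸ h)))) h0
        rw [hneg] at hlt
        rw [neg_neg, orient_swap]
        exact neg_pos.2 hlt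
    rwa [polyBody_comp_neg, neg_neg] at hrev

end Fan

/-! ### Turns of a simple polygon -/

/-- The signed turn of the polygon at its `i`-th vertex, measured by an area instead of an angle;
only its sign matters. -/
def turn {n : ℕ} (p : ZMod n → Plane) (i : ZMod n) : ℝ :=
  orient (p (i - 1)) (p i) (p (i + 1))

section Turn

variable {n : ℕ} {p : ZMod n → Plane} {i : ZMod n}

lemma IsSimplePolygon.rotate (hP : IsSimplePolygon p) (k : ZMod n) :
    IsSimplePolygon fun j => p (j + k) := by
  have hedge (j : ZMod n) : polyEdge (fun j => p (j + k)) j = polyEdge p (j + k) := by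
    rw [polyEdge, polyEdge, add_right_comm]
  refine ⟨hP.three_le, hP.inj.comp (add_left_injective k), fun i => ?_, fun i j hji hj hi => ?_⟩
  · rw [hedge, hedge, add_right_comm]
    exact hP.consec (i + k)
  · rw [hedge, hedge]
    exact hP.nonconsec (i + k) (j + k) ((add_left_injective k).ne hji)
      (by rwa [add_right_comm, Ne, add_left_inj]) (by rwa [add_right_comm, Ne, add_left_inj])

lemma turn_rotate (p : ZMod n → Plane) (k i : ZMod n) :
    turn (fun j => p (j + k)) i = turn p (i + k) := by
  simp only [turn, add_right_comm, sub_add_eq_add_sub]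

lemma IsFanVertex.of_rotate {k : ZMod n} (h : IsFanVertex (fun j => p (j + k)) i) :
    IsFanVertex p (i + k) := by
  obtain ⟨σ, hσ⟩ := h
  refine ⟨σ, fun j hj hj' => ?_⟩
  have := hσ (j - k) (fun h => hj (sub_eq_iff_eq_add.1 h))
    fun h => hj' (by rw [← h]; ring)
  simpa only [sub_add_cancel, add_right_comm] using this

lemma IsSimplePolygon.sbtw_of_turn_eq_zero (hP : IsSimplePolygon p) (h : turn p i = 0) :
    Sbtw ℝ (p (i - 1)) (p i) (p (i + 1)) := by
  have : Fact (1 < n) := ⟨by linarith [hP.three_le]⟩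
  refine sbtw_of_orient_eq_zero (hP.inj.ne (by simp)) (hP.inj.ne (by simp)) ?_ h
  simpa only [polyEdge, sub_add_cancel] using hP.consec (i - 1)

/-- A vertex farthest from the origin cannot lie strictly between two others. -/
lemma IsSimplePolygon.exists_turn_ne_zero (hP : IsSimplePolygon p) : ∃ i, turn p i ≠ 0 := by
  have : NeZero n := ⟨by linarith [hP.three_le]⟩
  obtain ⟨i, hi⟩ := Finite.exists_max fun i => dist (p i) 0
  refine ⟨i, fun h0 => ?_⟩
  exact ((hP.sbtw_of_turn_eq_zero h0).dist_lt_max_dist 0).not_ge (max_le (hi _) (hi _))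

end Turn

/-! ### Pentagons -/

/-- Twice the signed area of the triangle spanned by the `i`-th edge of a pentagon and the vertex
opposite to it. -/
def edgeOrient (p : ZMod 5 → Plane) (i : ZMod 5) : ℝ :=
  orient (p i) (p (i + 1)) (p (i + 3))

lemma mul_pos_trans {R : Type*} [CommRing R] [LinearOrder R] [IsStrictOrderedRing R] {x y z : R}
    (hxy : 0 < x * y) (hyz : 0 < y * z) : 0 < x * z := by
  have hprod : 0 < y * y * (x * z) := by linear_combination mul_pos hxy hyz
  exact pos_of_mul_pos_right hprod (mul_self_nonneg y)

lemma exists_three_eq_or_adjacent_ne (s : ZMod 5 → Bool) :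
    ∃ k b, (s k = b ∧ s (k + 1) = b ∧ s (k + 3) = b) ∨
      (s (k + 4) = b ∧ s k = b ∧ s (k + 1) = b ∧ s (k + 2) ≠ b ∧ s (k + 3) ≠ b) := by
  decide +revert

section Pentagon

variable {p : ZMod 5 → Plane} {σ : ℝ}

lemma add_two_add_three (i : ZMod 5) : i + 2 + 3 = i := by decide +revert

lemma turn_mul_turn_add_turn_mul_edgeOrient (p : ZMod 5 → Plane) (i : ZMod 5) :
    turn p (i + 1) * turn p (i - 1) + turn p i * edgeOrient p (i + 2) =
      edgeOrient p i * edgeOrient p (i - 1) := by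
  have h₁ : i + 2 + 1 = i + 3 := by ring
  have h₂ : i + 2 + 3 = i := add_two_add_three i
  have h₃ : i - 1 - 1 = i + 3 := by decide +revert
  have h₄ : i - 1 + 3 = i + 2 := by ring
  have h₅ : i + 1 + 1 = i + 2 := by ring
  simp only [turn, edgeOrient, h₁, h₂, h₃, h₄, h₅, add_sub_cancel_right, sub_add_cancel]
  rw [← orient_rotate (p (i - 1)) (p i) (p (i + 1)), ← orient_rotate (p (i - 1)) (p i) (p (i + 2)),
    orient_rotate (p i) (p (i + 2)) (p (i + 3)), orient_rotate (p i) (p (i + 3)) (p (i - 1))]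
  exact orient_mul_orient _ _ _ _ _

lemma IsSimplePolygon.turn_mul_edgeOrient_pos_or (hP : IsSimplePolygon p) (i : ZMod 5) :
    0 < turn p (i + 1) * edgeOrient p i ∨ 0 < turn p (i + 2) * edgeOrient p (i + 2) ∨
      turn p (i + 1) = 0 ∧ edgeOrient p i = 0 ∧ turn p (i + 2) = 0 ∧ edgeOrient p (i + 2) = 0 := by
  have h₂ : i + 1 + 1 = i + 2 := by ring
  have h₂' : i + 2 - 1 = i + 1 := by ring
  have h₃ : i + 2 + 1 = i + 3 := by ring
  have hdisj : segment ℝ (p i) (p (i + 1)) ∩ segment ℝ (p (i + 2)) (p (i + 3)) = ∅ := by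
    have h := hP.nonconsec i (i + 2) (by decide +revert) (by decide +revert) (by decide +revert)
    rwa [polyEdge, polyEdge, h₃] at h
  simp only [turn, edgeOrient, h₂, h₃, h₂', add_two_add_three, add_sub_cancel_right]
  have := orient_of_disjoint_segments hdisj
  tauto

lemma isFanVertex_of_pos {i : ZMod 5} (hnext : 0 < σ * turn p (i + 1))
    (hprev : 0 < σ * turn p (i - 1)) (hopp : 0 < σ * edgeOrient p (i + 2)) : IsFanVertex p i := by
  refine ⟨σ, fun j hj hj' => ?_⟩
  obtain rfl | rfl | rfl : j = i + 1 ∨ j = i + 2 ∨ j = i - 2 := by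
    clear hnext hprev hopp
    decide +revert
  · simpa only [turn, add_sub_cancel_right] using hnext
  · rwa [edgeOrient, add_two_add_three, ← orient_rotate, ← orient_rotate] at hopp
  · have hi : i - 2 + 1 = i - 1 := by ring
    have hi' : i - 1 - 1 = i - 2 := by ring
    rw [hi]
    rwa [turn, hi', sub_add_cancel, ← orient_rotate, ← orient_rotate] at hprev

lemma IsSimplePolygon.exists_isFanVertex_of_three_turns (hP : IsSimplePolygon p)
    (h₀ : 0 < σ * turn p 0) (h₁ : 0 < σ * turn p 1) (h₃ : 0 < σ * turn p 3) :
    ∃ i, IsFanVertex p i := by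
  have hnc : 0 < turn p 0 * edgeOrient p 4 ∨ 0 < turn p 1 * edgeOrient p 1 ∨
    turn p 0 = 0 ∧ _ := hP.turn_mul_edgeOrient_pos_or 4
  rcases hnc with h | h | ⟨h, -⟩
  · exact ⟨2, isFanVertex_of_pos h₃ h₁ (mul_pos_trans h₀ h)⟩
  · exact ⟨4, isFanVertex_of_pos h₀ h₃ (mul_pos_trans h₁ h)⟩
  · simp [h] at h₀

lemma IsSimplePolygon.isFanVertex_zero_of_adjacent_reflex (hP : IsSimplePolygon p)
    (h₄ : 0 < σ * turn p 4) (h₀ : 0 < σ * turn p 0) (h₁ : 0 < σ * turn p 1)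
    (h₂ : 0 < -σ * turn p 2) (h₃ : 0 < -σ * turn p 3) : IsFanVertex p 0 := by
  refine isFanVertex_of_pos (σ := σ) h₁ h₄ ?_
  change 0 < σ * edgeOrient p 2
  by_contra! he₂
  have hnc₁ : 0 < turn p 2 * edgeOrient p 1 ∨ 0 < turn p 3 * edgeOrient p 3 ∨
    turn p 2 = 0 ∧ _ := hP.turn_mul_edgeOrient_pos_or 1
  have hnc₃ : 0 < turn p 4 * edgeOrient p 3 ∨ 0 < turn p 0 * edgeOrient p 0 ∨
    turn p 4 = 0 ∧ _ := hP.turn_mul_edgeOrient_pos_or 3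
  have hnc₄ : 0 < turn p 0 * edgeOrient p 4 ∨ 0 < turn p 1 * edgeOrient p 1 ∨
    turn p 0 = 0 ∧ _ := hP.turn_mul_edgeOrient_pos_or 4
  have hplucker₂ : turn p 3 * turn p 1 + turn p 2 * edgeOrient p 4 =
    edgeOrient p 2 * edgeOrient p 1 := turn_mul_turn_add_turn_mul_edgeOrient p 2
  have hplucker₃ : turn p 4 * turn p 2 + turn p 3 * edgeOrient p 0 =
    edgeOrient p 3 * edgeOrient p 2 := turn_mul_turn_add_turn_mul_edgeOrient p 3
  rcases hnc₁ with h | h | ⟨h, -⟩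
  · have he₁ : 0 < -σ * edgeOrient p 1 := mul_pos_trans h₂ h
    have he₄ : 0 < σ * edgeOrient p 4 := by
      rcases hnc₄ with h | h | ⟨h, -⟩
      · exact mul_pos_trans h₀ h
      · linarith [mul_pos_trans h₁ h]
      · simp [h] at h₀
    refine lt_irrefl (0 : ℝ) ?_
    linear_combination mul_pos h₃ h₁ + mul_pos h₂ he₄ +
      mul_nonneg (neg_nonneg.2 he₂) he₁.le - σ ^ 2 * hplucker₂
  · have he₃ : 0 < -σ * edgeOrient p 3 := mul_pos_trans h₃ h
    have he₀ : 0 < σ * edgeOrient p 0 := by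
      rcases hnc₃ with h | h | ⟨h, -⟩
      · linarith [mul_pos_trans h₄ h]
      · exact mul_pos_trans h₀ h
      · simp [h] at h₄
    refine lt_irrefl (0 : ℝ) ?_
    linear_combination mul_pos h₄ h₂ + mul_pos h₃ he₀ +
      mul_nonneg (neg_nonneg.2 he₂) he₃.le - σ ^ 2 * hplucker₃
  · simp [h] at h₂

lemma IsSimplePolygon.exists_eq_mul_of_turn_zero_eq_zero (hP : IsSimplePolygon p)
    (h₀ : turn p 0 = 0) : ∃ r s : ℝ, 0 < r ∧ 0 < s ∧
      turn p 1 = s * edgeOrient p 1 ∧ edgeOrient p 4 = r * edgeOrient p 1 ∧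
      turn p 4 = r * edgeOrient p 3 ∧ edgeOrient p 0 = s * edgeOrient p 3 := by
  obtain ⟨r, s, hr, hs, horient⟩ := exists_orient_eq_mul_of_sbtw (hP.sbtw_of_turn_eq_zero h₀)
  have he₁ : edgeOrient p 1 = orient (p 4) (p 1) (p 2) := orient_rotate _ _ _
  have he₃ : edgeOrient p 3 = orient (p 4) (p 1) (p 3) := (orient_rotate _ _ _).symm
  have ht₄ : turn p 4 = orient (p 4) (p 0) (p 3) := (orient_rotate _ _ _).symm
  rw [he₁, he₃, ht₄]
  exact ⟨r, s, hr, hs, (horient (p 2)).2, (horient (p 2)).1, (horient (p 3)).1, (horient (p 3)).2⟩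

lemma IsSimplePolygon.edgeOrient_mul_pos_or_of_turn_zero_eq_zero (hP : IsSimplePolygon p)
    (h₀ : turn p 0 = 0) : 0 < edgeOrient p 1 * edgeOrient p 3 ∨ 0 < turn p 2 * turn p 3 ∨
      edgeOrient p 1 = 0 ∧ edgeOrient p 3 = 0 := by
  obtain ⟨r, s, hr, hs, ht₁, he₄, ht₄, he₀⟩ := hP.exists_eq_mul_of_turn_zero_eq_zero h₀
  have hnc₀ : 0 < turn p 1 * edgeOrient p 0 ∨ 0 < turn p 2 * edgeOrient p 2 ∨
    turn p 1 = 0 ∧ edgeOrient p 0 = 0 ∧ _ := hP.turn_mul_edgeOrient_pos_or 0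
  have hnc₂ : 0 < turn p 3 * edgeOrient p 2 ∨ 0 < turn p 4 * edgeOrient p 4 ∨
    _ ∧ _ ∧ turn p 4 = 0 ∧ edgeOrient p 4 = 0 := hP.turn_mul_edgeOrient_pos_or 2
  rw [ht₁, he₀, mul_mul_mul_comm, mul_pos_iff_of_pos_left (mul_pos hs hs),
    mul_eq_zero_iff_left hs.ne', mul_eq_zero_iff_left hs.ne'] at hnc₀
  rw [ht₄, he₄, mul_mul_mul_comm, mul_pos_iff_of_pos_left (mul_pos hr hr),
    mul_eq_zero_iff_left hr.ne', mul_eq_zero_iff_left hr.ne', mul_comm (edgeOrient p 3)] at hnc₂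
  rcases hnc₀ with h | h₂ | ⟨h₁, h₃, -⟩
  · exact Or.inl h
  · rcases hnc₂ with h₃ | h | ⟨-, -, h₃, h₁⟩
    · exact Or.inr (Or.inl (mul_pos_trans h₂ (mul_comm (turn p 3) _ ▸ h₃)))
    · exact Or.inl h
    · exact Or.inr (Or.inr ⟨h₁, h₃⟩)
  · exact Or.inr (Or.inr ⟨h₁, h₃⟩)

lemma IsSimplePolygon.isFanVertex_two_or_three_of_turn_zero_eq_zero (hP : IsSimplePolygon p)
    (h₀ : turn p 0 = 0) : IsFanVertex p 2 ∨ IsFanVertex p 3 := by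
  obtain ⟨r, s, hr, hs, ht₁, he₄, ht₄, he₀⟩ := hP.exists_eq_mul_of_turn_zero_eq_zero h₀
  have hpos {c e : ℝ} (hc : 0 < c) (he : e ≠ 0) : 0 < e * (c * e) := by
    rw [mul_left_comm]
    exact mul_pos hc (mul_self_pos.2 he)
  have hfan₂ (h : 0 < edgeOrient p 1 * turn p 3) : IsFanVertex p 2 := by
    have he : edgeOrient p 1 ≠ 0 := left_ne_zero_of_mul h.ne'
    exact isFanVertex_of_pos h (ht₁ ▸ hpos hs he :) (he₄ ▸ hpos hr he :)
  have hfan₃ (h : 0 < edgeOrient p 3 * turn p 2) : IsFanVertex p 3 := by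
    have he : edgeOrient p 3 ≠ 0 := left_ne_zero_of_mul h.ne'
    exact isFanVertex_of_pos (ht₄ ▸ hpos hr he :) h (he₀ ▸ hpos hs he :)
  have hsame := hP.edgeOrient_mul_pos_or_of_turn_zero_eq_zero h₀
  have hnc₁ : 0 < turn p 2 * edgeOrient p 1 ∨ 0 < turn p 3 * edgeOrient p 3 ∨
    turn p 2 = 0 ∧ edgeOrient p 1 = 0 ∧ turn p 3 = 0 ∧ edgeOrient p 3 = 0 :=
      hP.turn_mul_edgeOrient_pos_or 1
  rcases hnc₁ with h | h | ⟨h₂, h₁, h₃, h₃'⟩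
  · rw [mul_comm] at h
    rcases hsame with he | ht | ⟨he, -⟩
    · exact Or.inr (hfan₃ (mul_pos_trans (mul_comm (edgeOrient p 1) _ ▸ he) h))
    · exact Or.inl (hfan₂ (mul_pos_trans h ht))
    · simp [he] at h
  · rw [mul_comm] at h
    rcases hsame with he | ht | ⟨-, he⟩
    · exact Or.inl (hfan₂ (mul_pos_trans he h))
    · exact Or.inr (hfan₃ (mul_pos_trans h (mul_comm (turn p 2) _ ▸ ht)))
    · simp [he] at h
  · obtain ⟨i, hi⟩ := hP.exists_turn_ne_zero
    refine absurd ?_ hi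
    rw [h₁, mul_zero] at ht₁
    rw [h₃', mul_zero] at ht₄
    fin_cases i
    exacts [h₀, ht₁, h₂, h₃, ht₄]

lemma IsSimplePolygon.exists_isFanVertex_of_turn_ne_zero (hP : IsSimplePolygon p)
    (h : ∀ i, turn p i ≠ 0) : ∃ i, IsFanVertex p i := by
  let s (i : ZMod 5) : Bool := 0 < turn p i
  obtain ⟨k, b, hb⟩ := exists_three_eq_or_adjacent_ne s
  obtain ⟨σ, hσ, hσ'⟩ : ∃ σ : ℝ, (∀ i, s i = b → 0 < σ * turn p i) ∧
      ∀ i, s i ≠ b → 0 < -σ * turn p i := by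
    cases b
    · refine ⟨-1, fun i hi => ?_, fun i hi => ?_⟩ <;> grind
    · refine ⟨1, fun i hi => ?_, fun i hi => ?_⟩ <;> grind
  have hturn (i : ZMod 5) : turn (fun j => p (j + k)) i = turn p (k + i) := by
    rw [turn_rotate, add_comm]
  suffices h : ∃ i, IsFanVertex (fun j => p (j + k)) i from h.imp' (· + k) fun _ => .of_rotate
  rcases hb with ⟨h₀, h₁, h₃⟩ | ⟨h₄, h₀, h₁, h₂, h₃⟩
  · refine (hP.rotate k).exists_isFanVertex_of_three_turns (σ := σ) ?_ ?_ ?_ <;>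
      simp only [hturn, add_zero, hσ, h₀, h₁, h₃]
  · refine ⟨0, (hP.rotate k).isFanVertex_zero_of_adjacent_reflex (σ := σ) ?_ ?_ ?_ ?_ ?_⟩ <;>
      simp only [hturn, add_zero, hσ, h₄, h₀, h₁, hσ', h₂, h₃, Ne, not_false_eq_true]

theorem IsSimplePolygon.exists_isFanVertex (hP : IsSimplePolygon p) : ∃ i, IsFanVertex p i := by
  by_cases! h : ∃ k, turn p k = 0
  · obtain ⟨k, hk⟩ := h
    have h₀ : turn (fun j => p (j + k)) 0 = 0 := by rw [turn_rotate, zero_add, hk]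
    rcases (hP.rotate k).isFanVertex_two_or_three_of_turn_zero_eq_zero h₀ with hi | hi
    exacts [⟨_, hi.of_rotate⟩, ⟨_, hi.of_rotate⟩]
  · exact hP.exists_isFanVertex_of_turn_ne_zero h

end Pentagon

theorem stmt14 (p : ZMod 5 → Plane) (hP : IsSimplePolygon p) :
    ∃ i : ZMod 5, ∀ x ∈ polyBody p ∪ intP (polyBody p),
      segment ℝ (p i) x ⊆ polyBody p ∪ intP (polyBody p) := by
  obtain ⟨i, hi⟩ := hP.exists_isFanVertex
  exact ⟨i, fun x hx => (starConvex_union_intP_of_isFanVertex hi).segment_subset hx⟩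
end

section
/- Let P be a simple closed n-gon in ℝ² with n ≥ 3. Then the polygonal diameter of int P is at most ⌊n/2⌋: any two points of the bounded component of ℝ² \ P can be joined inside it by a polygonal path with at most ⌊n/2⌋ segments. -/
open Set Metric

/-!
The points that see a simple polygon from its left form a single connected set, and so do those
that see it from its right. The total angle under which the polygon is seen is constant on each set
and jumps by `2π` across an edge, so the Jordan interior consists of the points off the polygon
whose total angle is nonzero.

A polygon with at least four vertices has a diagonal, which cuts it into two polygons whose numbers
of edges other than the diagonal add up to `n`. Induction along such cuts shows that an interior
point of a polygon whose edges other than a chosen one number `m` reaches both ends of that edge in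
`⌈m / 2⌉` links through mutually visible vertices, and one of the ends even in `⌊m / 2⌋`: the
triangle at the chosen edge, in a triangulation, has a side that cuts off the point, and its third
vertex costs at most one more link.

Two interior points separated by a diagonal into parts with `k` and `n - k` further edges meet at an
end of the diagonal after at most `⌊k / 2⌋ + ⌈(n - k) / 2⌉` or `⌈k / 2⌉ + ⌊(n - k) / 2⌋` links, and
the smaller of these is at most `⌊n / 2⌋`. Points that are not separated lie in a common smaller
polygon. Pushing the vertices slightly to the left turns links into segments inside the polygon.
-/

namespace PlanePolygon

open Filter Topology

/-! ### Left of a corner -/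

section Corner

attribute [local instance] Complex.finrank_real_complex_fact

/-- The signed area spanned by two plane vectors: `0 < cross A z` means that `z` points to the left
of the direction `A`. -/
noncomputable abbrev cross : ℂ →ₗ[ℝ] ℂ →ₗ[ℝ] ℝ := Complex.orientation.areaForm

lemma cross_apply (x y : ℂ) : cross x y = x.re * y.im - x.im * y.re := by
  simp [Complex.areaForm, sub_eq_add_neg]

lemma cross_self (x : ℂ) : cross x x = 0 := Complex.orientation.areaForm_apply_self x

lemma cross_swap (x y : ℂ) : cross x y = -cross y x := Complex.orientation.areaForm_swap x y

lemma inner_mul_cross_sub (o x y : ℂ) :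
    inner ℝ o x * cross o y - cross o x * inner ℝ o y = ‖o‖ ^ 2 * cross x y :=
  Complex.orientation.inner_mul_areaForm_sub o x y

lemma continuous_cross (x : ℂ) : Continuous (cross x) :=
  (cross x).continuous_of_finiteDimensional

lemma cross_I_mul_self_pos {x : ℂ} (hx : x ≠ 0) : 0 < cross x (Complex.I * x) := by
  have := Complex.normSq_pos.2 hx
  simpa [cross_apply, Complex.normSq_apply] using this

lemma exists_eq_smul_of_cross_eq_zero {x y : ℂ} (hx : x ≠ 0) (h : cross x y = 0) :
    ∃ t : ℝ, y = t • x := by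
  rcases le_total 0 (inner ℝ x y) with hi | hi
  · obtain ⟨t, -, ht⟩ := (Complex.orientation.nonneg_inner_and_areaForm_eq_zero_iff_sameRay
      x y |>.1 ⟨hi, h⟩).exists_nonneg_left hx
    exact ⟨t, ht.symm⟩
  · obtain ⟨t, -, ht⟩ := (Complex.orientation.nonneg_inner_and_areaForm_eq_zero_iff_sameRay
      x (-y) |>.1 ⟨by rw [inner_neg_right]; linarith, by
        rw [map_neg, h, neg_zero]⟩).exists_nonneg_left hx
    exact ⟨-t, by rw [neg_smul, ht, neg_neg]⟩

variable {A B d u z : ℂ}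

/-- The directions strictly to the left of both `A` and `B`. -/
def strictLeft (A B : ℂ) : Set ℂ := {u | 0 < cross A u ∧ 0 < cross B u}

/-- The open sector to the left of a path that arrives in direction `A` and leaves in direction `B`:
an intersection of half-planes at a left turn, a union of half-planes otherwise. -/
def openSector (A B : ℂ) : Set ℂ :=
  {z | if 0 < cross A B then 0 < cross A z ∧ 0 < cross B z else 0 < cross A z ∨ 0 < cross B z}

/-- The closed sector to the left of a path that arrives in direction `A` and leaves in
direction `B`. -/
def closedSector (A B : ℂ) : Set ℂ :=
  {z | if 0 < cross A B then 0 ≤ cross A z ∧ 0 ≤ cross B z else 0 ≤ cross A z ∨ 0 ≤ cross B z}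

lemma isOpen_strictLeft (A B : ℂ) : IsOpen (strictLeft A B) :=
  (isOpen_lt continuous_const (continuous_cross A)).inter
    (isOpen_lt continuous_const (continuous_cross B))

lemma neg_mem_strictLeft_reverse (hu : u ∈ strictLeft A B) : -u ∈ strictLeft (-B) (-A) := by
  simp only [strictLeft, mem_ofPred_eq, map_neg, LinearMap.neg_apply, neg_neg] at hu ⊢
  exact hu.symm

lemma strictLeft_subset_closedSector (A B : ℂ) : strictLeft A B ⊆ closedSector A B := by
  intro u hu
  simp only [strictLeft, closedSector, mem_ofPred_eq] at hu ⊢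
  grind

lemma smul_mem_strictLeft {t : ℝ} (ht : 0 < t) (hu : u ∈ strictLeft A B) :
    t • u ∈ strictLeft A B := by
  simp only [strictLeft, mem_ofPred_eq, map_smul, smul_eq_mul] at hu ⊢
  exact hu.imp (mul_pos ht) (mul_pos ht)

lemma smul_mem_closedSector {t : ℝ} (ht : 0 ≤ t) (hd : d ∈ closedSector A B) :
    t • d ∈ closedSector A B := by
  simp only [closedSector, mem_ofPred_eq, map_smul, smul_eq_mul] at hd ⊢
  split_ifs at hd ⊢
  · exact hd.imp (mul_nonneg ht) (mul_nonneg ht)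
  · exact hd.imp (mul_nonneg ht) (mul_nonneg ht)

lemma mem_closedSector_or_reverse (A B d : ℂ) :
    d ∈ closedSector A B ∨ d ∈ closedSector (-B) (-A) := by
  have := cross_swap A B
  simp only [closedSector, mem_ofPred_eq, map_neg, LinearMap.neg_apply]
  grind

lemma right_mem_closedSector (A B : ℂ) : B ∈ closedSector A B := by
  simp only [closedSector, mem_ofPred_eq, cross_self]
  grind

lemma neg_left_mem_closedSector (A B : ℂ) : -A ∈ closedSector A B := by
  have := cross_swap A B
  simp only [closedSector, mem_ofPred_eq, map_neg, cross_self]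
  grind

lemma smul_mem_closedSector_self (A : ℂ) (t : ℝ) : t • A ∈ closedSector A A := by
  simp only [closedSector, mem_ofPred_eq, map_smul, cross_self, smul_zero, lt_irrefl, if_false,
    le_refl, or_self]

lemma add_smul_mem_openSector {e : ℝ} (hd : d ∈ closedSector A B) (hu : u ∈ strictLeft A B)
    (he : 0 < e) : d + e • u ∈ openSector A B := by
  have hA := mul_pos he hu.1
  have hB := mul_pos he hu.2
  simp only [openSector, closedSector, mem_ofPred_eq, map_add, map_smul, smul_eq_mul] at hd ⊢
  grind

lemma not_sameRay_right_of_mem_openSector (hB : B ≠ 0) (hz : z ∈ openSector A B) :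
    ¬ SameRay ℝ B z := by
  intro h
  obtain ⟨t, ht, rfl⟩ := h.exists_nonneg_left hB
  simp only [openSector, mem_ofPred_eq, map_smul, cross_self, smul_eq_mul, mul_zero, lt_irrefl,
    and_false, or_false, if_false_left] at hz
  exact hz.1 (pos_of_mul_pos_right hz.2 ht)

lemma not_sameRay_neg_left_of_mem_openSector (hA : A ≠ 0) (hz : z ∈ openSector A B) :
    ¬ SameRay ℝ (-A) z := by
  intro h
  obtain ⟨t, ht, rfl⟩ := h.exists_nonneg_left (neg_ne_zero.2 hA)
  simp only [openSector, mem_ofPred_eq, map_smul, map_neg, cross_self, smul_eq_mul, mul_zero,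
    neg_zero, lt_irrefl, false_and, false_or, if_false_left, ← cross_swap A B] at hz
  exact hz.1 (pos_of_mul_pos_right hz.2 ht)

lemma strictLeft_nonempty (hA : A ≠ 0) (h : ¬ SameRay ℝ (-A) B) : (strictLeft A B).Nonempty := by
  rcases lt_trichotomy (cross A B) 0 with hAB | hAB | hAB
  · refine ⟨A - B, ?_, ?_⟩ <;> simp only [map_sub, cross_self, cross_swap B A] <;> linarith
  · have hAB' : SameRay ℝ A B := by
      refine (Complex.orientation.nonneg_inner_and_areaForm_eq_zero_iff_sameRay A B).1 ⟨?_, hAB⟩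
      by_contra hi
      refine h ((Complex.orientation.nonneg_inner_and_areaForm_eq_zero_iff_sameRay (-A) B).1
        ⟨?_, by rw [map_neg, LinearMap.neg_apply, hAB, neg_zero]⟩)
      rw [inner_neg_left]
      linarith
    obtain ⟨t, ht, rfl⟩ := hAB'.exists_nonneg_left hA
    have ht' : 0 < t := ht.lt_of_ne (by rintro rfl; simp at h)
    have hI := cross_I_mul_self_pos hA
    exact ⟨Complex.I * A, hI, by
      simpa only [map_smul, LinearMap.smul_apply, smul_eq_mul] using mul_pos ht' hI⟩
  · refine ⟨B - A, ?_, ?_⟩ <;> simp only [map_sub, cross_self, cross_swap B A] <;> linarith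

/-- Near `z` the set `K` lies on the two rays that a path through `z` with incoming direction `A`
and outgoing direction `B` traces out. -/
structure HasCorner (K : Set ℂ) (z A B : ℂ) : Prop where
  left_ne : A ≠ 0
  right_ne : B ≠ 0
  eventually_sameRay : ∀ᶠ w in 𝓝 z, w ∈ K → SameRay ℝ B (w - z) ∨ SameRay ℝ (-A) (w - z)

variable {K : Set ℂ} {c x y v w z' A' B' u' : ℂ}

/-- Moved to the left, a point near a corner lies in the open sector there, which avoids both rays
of `K`; compactness of the segment makes this uniform. -/
lemma eventually_disjoint_segment (hK : IsClosed K)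
    (h : ∀ t ∈ Icc (0 : ℝ) 1, AffineMap.lineMap x y t ∈ K →
      ∃ A B, HasCorner K (AffineMap.lineMap x y t) A B ∧ AffineMap.lineMap v w t ∈ strictLeft A B ∧
        ∀ s ∈ Icc (0 : ℝ) 1,
          AffineMap.lineMap x y s - AffineMap.lineMap x y t ∈ closedSector A B) :
    ∀ᶠ e : ℝ in 𝓝[>] 0, Disjoint (segment ℝ (x + e • v) (y + e • w)) K := by
  have hline : ∀ e s : ℝ, AffineMap.lineMap (x + e • v) (y + e • w) s =
      AffineMap.lineMap x y s + e • AffineMap.lineMap v w s := fun e s => by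
    simp only [AffineMap.lineMap_apply_module']; module
  have key : ∀ᶠ e : ℝ in 𝓝 0, ∀ s ∈ Icc (0 : ℝ) 1, 0 < e ∧ s ∈ Icc (0 : ℝ) 1 →
      AffineMap.lineMap x y s + e • AffineMap.lineMap v w s ∉ K := by
    refine isCompact_Icc.eventually_forall_of_forall_eventually fun t ht => ?_
    have hcont : Continuous fun q : ℝ × ℝ =>
        AffineMap.lineMap x y q.2 + q.1 • AffineMap.lineMap v w q.2 := by
      simp only [AffineMap.lineMap_apply_module']; fun_prop
    have hlim := hcont.tendsto (0, t)
    simp only [zero_smul, add_zero] at hlim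
    by_cases htK : AffineMap.lineMap x y t ∈ K
    · obtain ⟨A, B, hc, hleft, hsec⟩ := h t ht htK
      have hdir : Continuous fun q : ℝ × ℝ => AffineMap.lineMap v w q.2 := by
        simp only [AffineMap.lineMap_apply_module']; fun_prop
      filter_upwards [hlim.eventually hc.eventually_sameRay,
        hdir.continuousAt.eventually_mem ((isOpen_strictLeft A B).mem_nhds hleft)]
        with ⟨e, s⟩ hray hmem ⟨he, hs⟩ hK'
      have hopen := add_smul_mem_openSector (hsec s hs) hmem he
      rw [sub_add_eq_add_sub] at hopen
      exact (hray hK').elim (not_sameRay_right_of_mem_openSector hc.right_ne hopen)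
        (not_sameRay_neg_left_of_mem_openSector hc.left_ne hopen)
    · filter_upwards [hlim.eventually (hK.isOpen_compl.mem_nhds htK)] with q hq _ using hq
  filter_upwards [key.filter_mono nhdsWithin_le_nhds, self_mem_nhdsWithin] with e he hpos
  rw [segment_eq_image_lineMap, Set.disjoint_left]
  rintro _ ⟨s, hs, rfl⟩
  rw [hline]
  exact he s hs ⟨hpos, hs⟩

lemma tendsto_add_smul {E : Type*} [AddCommGroup E] [Module ℝ E] [TopologicalSpace E]
    [ContinuousAdd E] [ContinuousSMul ℝ E] (z w : E) :
    Tendsto (fun e : ℝ => z + e • w) (𝓝[>] 0) (𝓝 z) := by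
  have h : Tendsto (fun e : ℝ => z + e • w) (𝓝 0) (𝓝 (z + (0 : ℝ) • w)) :=
    Continuous.tendsto (by fun_prop) 0
  rw [zero_smul, add_zero] at h
  exact h.mono_left nhdsWithin_le_nhds

/-- The segment from `c` to `z` meets `K` at most in its endpoint `z`. -/
def Sees (K : Set ℂ) (c z : ℂ) : Prop := ∀ x ∈ segment ℝ c z, x ∈ K → x = z

lemma HasCorner.eventually_sees (h : HasCorner K z A B) (hu : u ∈ strictLeft A B) :
    ∀ᶠ e : ℝ in 𝓝[>] 0, z + e • u ∉ K ∧ Sees K (z + e • u) z := by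
  have hoff : ∀ᶠ e : ℝ in 𝓝[>] 0, z + e • u ∉ K := by
    filter_upwards [(tendsto_add_smul z u).eventually h.eventually_sameRay, self_mem_nhdsWithin]
      with e hray he hK
    have hopen := add_smul_mem_openSector (zero_smul ℝ B ▸
      smul_mem_closedSector le_rfl (right_mem_closedSector A B)) hu he
    rw [zero_add] at hopen
    simp only [add_sub_cancel_left] at hray
    exact (hray hK).elim (not_sameRay_right_of_mem_openSector h.right_ne hopen)
      (not_sameRay_neg_left_of_mem_openSector h.left_ne hopen)
  obtain ⟨δ, hδ, hoff⟩ := mem_nhdsGT_iff_exists_Ioc_subset.1 hoff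
  filter_upwards [Ioc_mem_nhdsGT hδ] with e he
  refine ⟨hoff he, fun x hx hxK => ?_⟩
  rw [segment_symm, segment_eq_image'] at hx
  obtain ⟨t, ht, rfl⟩ := hx
  rcases ht.1.eq_or_lt with rfl | ht0
  · simp
  · refine absurd hxK ?_
    simp only [add_sub_cancel_left, smul_smul]
    exact hoff ⟨mul_pos ht0 he.1, (mul_le_of_le_one_left he.1.le ht.2).trans he.2⟩

lemma HasCorner.eventually_disjoint_segment_of_sees (hz : HasCorner K z A B) (hK : IsClosed K)
    (hzK : z ∈ K) (hcK : c ∉ K) (hc : Sees K c z) (hd : c - z ∈ closedSector A B)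
    (hu : u ∈ strictLeft A B) :
    ∀ᶠ e : ℝ in 𝓝[>] 0, Disjoint (segment ℝ c (z + e • u)) K := by
  have hcz : c ≠ z := fun h => hcK (h ▸ hzK)
  suffices ∀ᶠ e : ℝ in 𝓝[>] 0, Disjoint (segment ℝ (c + e • (0 : ℂ)) (z + e • u)) K by
    simpa only [smul_zero, add_zero] using this
  refine eventually_disjoint_segment hK fun t ht htK => ?_
  have hline := hc _ (segment_eq_image_lineMap ℝ c z ▸ mem_image_of_mem _ ht) htK
  obtain rfl : t = 1 := ((AffineMap.lineMap_eq_right_iff).1 hline).resolve_left hcz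
  refine ⟨A, B, by rwa [hline], by simpa using hu, fun s hs => ?_⟩
  convert smul_mem_closedSector (sub_nonneg.2 hs.2) hd using 1
  simp only [AffineMap.lineMap_apply_module']; module

lemma HasCorner.eventually_disjoint_segment_of_openSegment (hz : HasCorner K z A B)
    (hz' : HasCorner K z' A' B') (hK : IsClosed K)
    (hopen : Disjoint (openSegment ℝ z z') K) (hd : z' - z ∈ closedSector A B)
    (hd' : z - z' ∈ closedSector A' B') (hu : u ∈ strictLeft A B) (hu' : u' ∈ strictLeft A' B') :
    ∀ᶠ e : ℝ in 𝓝[>] 0, Disjoint (segment ℝ (z + e • u) (z' + e • u')) K := by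
  refine eventually_disjoint_segment hK fun t ht htK => ?_
  have ht' : t = 0 ∨ t = 1 := by
    by_contra! htne
    refine Set.disjoint_left.1 hopen ?_ htK
    rw [openSegment_eq_image_lineMap]
    exact ⟨t, ⟨ht.1.lt_of_ne' htne.1, ht.2.lt_of_ne htne.2⟩, rfl⟩
  rcases ht' with rfl | rfl
  · refine ⟨A, B, by simpa using hz, by simpa using hu, fun s hs => ?_⟩
    simpa [AffineMap.lineMap_apply_module'] using smul_mem_closedSector hs.1 hd
  · refine ⟨A', B', by simpa using hz', by simpa using hu', fun s hs => ?_⟩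
    convert smul_mem_closedSector (sub_nonneg.2 hs.2) hd' using 1
    simp only [AffineMap.lineMap_apply_module']; module

end Corner

/-! ### Simple polygons -/

section Polygon

variable {n : ℕ} {p : ZMod n → ℂ} {i j k : ZMod n} {x z A B u : ℂ}

/-- The `i`-th edge of the closed polygon with vertices `p`. -/
def edge (p : ZMod n → ℂ) (i : ZMod n) : Set ℂ := segment ℝ (p i) (p (i + 1))

/-- The closed polygon with vertices `p`, as a curve. -/
def boundary (p : ZMod n → ℂ) : Set ℂ := ⋃ i, edge p i

/-- The direction of the `i`-th edge. -/
def edgeVec (p : ZMod n → ℂ) (i : ZMod n) : ℂ := p (i + 1) - p i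

/-- A simple closed polygon. The two conditions on pairs of edges are merged into one: distinct
edges meet at most in a common endpoint. -/
structure IsSimple (p : ZMod n → ℂ) : Prop where
  three_le : 3 ≤ n
  injective : Function.Injective p
  eq_of_mem_edge : ∀ {i j x}, i ≠ j → x ∈ edge p i → x ∈ edge p j →
    (j = i + 1 ∧ x = p j) ∨ (i = j + 1 ∧ x = p i)

lemma edge_subset_boundary (p : ZMod n → ℂ) (i : ZMod n) : edge p i ⊆ boundary p :=
  subset_iUnion (edge p) i

lemma left_mem_edge (p : ZMod n → ℂ) (i : ZMod n) : p i ∈ edge p i := left_mem_segment _ _ _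

lemma right_mem_edge (p : ZMod n → ℂ) (i : ZMod n) : p (i + 1) ∈ edge p i := right_mem_segment _ _ _

lemma mem_edge_iff : x ∈ edge p i ↔ ∃ t ∈ Icc (0 : ℝ) 1, x = p i + t • edgeVec p i := by
  simp [edge, segment_eq_image', edgeVec, eq_comm]

lemma vertex_mem_boundary (p : ZMod n → ℂ) (i : ZMod n) : p i ∈ boundary p :=
  edge_subset_boundary p i (left_mem_edge p i)

lemma isCompact_edge (p : ZMod n → ℂ) (i : ZMod n) : IsCompact (edge p i) := by
  rw [edge, segment_eq_image']
  exact isCompact_Icc.image (by fun_prop)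

lemma isCompact_boundary [NeZero n] (p : ZMod n → ℂ) : IsCompact (boundary p) :=
  isCompact_iUnion (isCompact_edge p)

lemma isClosed_boundary [NeZero n] (p : ZMod n → ℂ) : IsClosed (boundary p) :=
  (isCompact_boundary p).isClosed

lemma boundary_subset_convexHull (p : ZMod n → ℂ) : boundary p ⊆ convexHull ℝ (range p) :=
  iUnion_subset fun i => (convex_convexHull ℝ _).segment_subset
    (subset_convexHull ℝ _ (mem_range_self i)) (subset_convexHull ℝ _ (mem_range_self _))

lemma edgeVec_sub_one (p : ZMod n → ℂ) (i : ZMod n) : edgeVec p (i - 1) = p i - p (i - 1) := by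
  rw [edgeVec, sub_add_cancel]

lemma eventually_mem_edge_imp [NeZero n] (p : ZMod n → ℂ) (z : ℂ) :
    ∀ᶠ w in 𝓝 z, ∀ k, w ∈ edge p k → z ∈ edge p k := by
  refine eventually_all.2 fun k => ?_
  by_cases hz : z ∈ edge p k
  · exact Eventually.of_forall fun _ _ => hz
  · exact ((isCompact_edge p k).isClosed.isOpen_compl.eventually_mem hz).mono
      fun w hw hwk => absurd hwk hw

lemma natCast_ne_zero {m : ℕ} (hm : m ≠ 0) (hmn : m < n) : (m : ZMod n) ≠ 0 := by
  rw [Ne, ZMod.natCast_eq_zero_iff]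
  exact fun h => absurd (Nat.le_of_dvd (by omega) h) (by omega)

lemma periodic_one_eq_zero {α : Type*} [NeZero n] {f : ZMod n → α} (hf : Function.Periodic f 1)
    (i : ZMod n) : f i = f 0 := by
  simpa using hf.nsmul_eq i.val

namespace IsSimple

lemma one_ne_zero (hp : IsSimple p) : (1 : ZMod n) ≠ 0 := by
  have := hp.three_le
  exact_mod_cast natCast_ne_zero (n := n) (m := 1) (by omega) (by omega)

lemma two_ne_zero (hp : IsSimple p) : (2 : ZMod n) ≠ 0 := by
  have := hp.three_le
  exact_mod_cast natCast_ne_zero (n := n) (m := 2) (by omega) (by omega)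

lemma edgeVec_ne_zero (hp : IsSimple p) (i : ZMod n) : edgeVec p i ≠ 0 :=
  sub_ne_zero.2 (hp.injective.ne (by simpa using hp.one_ne_zero))

lemma eq_or_eq_of_vertex_mem_edge (hp : IsSimple p) (h : p j ∈ edge p i) : j = i ∨ j = i + 1 := by
  by_contra! hij
  rcases hp.eq_of_mem_edge hij.1.symm h (left_mem_edge p j) with h' | h'
  · exact hij.2 h'.1
  · exact hij.1 (hp.injective h'.2)

lemma vertex_notMem_openSegment (hp : IsSimple p) (i j : ZMod n) :
    p j ∉ openSegment ℝ (p i) (p (i + 1)) := by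
  intro h
  have hne : p i ≠ p (i + 1) := hp.injective.ne (by simpa using hp.one_ne_zero)
  rcases hp.eq_or_eq_of_vertex_mem_edge (openSegment_subset_segment _ _ _ h) with rfl | rfl
  · exact hne (left_mem_openSegment_iff.1 h)
  · exact hne (right_mem_openSegment_iff.1 h)

lemma eq_of_mem_openSegment (hp : IsSimple p) (hi : z ∈ openSegment ℝ (p i) (p (i + 1)))
    (hj : z ∈ edge p j) : j = i := by
  by_contra hij
  rcases hp.eq_of_mem_edge hij hj (openSegment_subset_segment _ _ _ hi) with ⟨-, rfl⟩ | ⟨-, rfl⟩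
  · exact hp.vertex_notMem_openSegment _ _ hi
  · exact hp.vertex_notMem_openSegment _ _ hi

lemma not_sameRay_neg_edgeVec (hp : IsSimple p) (i : ZMod n) :
    ¬ SameRay ℝ (-edgeVec p (i - 1)) (edgeVec p i) := by
  intro h
  obtain ⟨v, a, b, ha, hb, hab, hA, hB⟩ := h.exists_eq_smul
  have hprev : p i + (a * b) • v ∈ edge p (i - 1) := by
    refine mem_edge_iff.2 ⟨1 - b, ⟨by linarith, by linarith⟩, ?_⟩
    have hA' : edgeVec p (i - 1) = -(a • v) := by rw [← hA, neg_neg]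
    have hi : p i = p (i - 1) + edgeVec p (i - 1) := by rw [edgeVec_sub_one]; ring
    rw [hi, hA']
    module
  have hnext : p i + (a * b) • v ∈ edge p i :=
    mem_edge_iff.2 ⟨a, ⟨ha, by linarith⟩, by rw [hB, smul_smul]⟩
  have hzero : (a * b) • v = 0 := by
    rcases hp.eq_of_mem_edge (by simpa using hp.one_ne_zero) hprev hnext with h' | h'
    · simpa using h'.2
    · exact absurd (by linear_combination -h'.1 : (2 : ZMod n) = 0) hp.two_ne_zero
  rcases smul_eq_zero.1 hzero with h' | rfl
  · rcases mul_eq_zero.1 h' with rfl | rfl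
    · exact hp.edgeVec_ne_zero (i - 1) (by simpa using hA)
    · exact hp.edgeVec_ne_zero i (by simpa using hB)
  · exact hp.edgeVec_ne_zero i (by simpa using hB)

end IsSimple

/-- The points of the polygon together with the directions in which it passes through them: `A`
when arriving, `B` when leaving. -/
inductive IsCorner (p : ZMod n → ℂ) : ℂ → ℂ → ℂ → Prop
  | vertex (i : ZMod n) : IsCorner p (p i) (edgeVec p (i - 1)) (edgeVec p i)
  | inner {i : ZMod n} {z : ℂ} (hz : z ∈ openSegment ℝ (p i) (p (i + 1))) :
      IsCorner p z (edgeVec p i) (edgeVec p i)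

lemma exists_isCorner (hz : z ∈ boundary p) : ∃ A B, IsCorner p z A B := by
  obtain ⟨i, hi⟩ := mem_iUnion.1 hz
  rw [edge, ← insert_endpoints_openSegment] at hi
  rcases hi with rfl | rfl | hi
  · exact ⟨_, _, .vertex i⟩
  · exact ⟨_, _, .vertex (i + 1)⟩
  · exact ⟨_, _, .inner hi⟩

namespace IsCorner

lemma mem_boundary (h : IsCorner p z A B) : z ∈ boundary p := by
  cases h with
  | vertex i => exact vertex_mem_boundary p i
  | inner hz => exact edge_subset_boundary p _ (openSegment_subset_segment _ _ _ hz)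

lemma strictLeft_nonempty (hp : IsSimple p) (h : IsCorner p z A B) :
    (strictLeft A B).Nonempty := by
  cases h with
  | vertex i =>
    exact PlanePolygon.strictLeft_nonempty (hp.edgeVec_ne_zero _) (hp.not_sameRay_neg_edgeVec i)
  | @inner i =>
    have hI := cross_I_mul_self_pos (hp.edgeVec_ne_zero i)
    exact ⟨_, hI, hI⟩

lemma hasCorner [NeZero n] (hp : IsSimple p) (h : IsCorner p z A B) :
    HasCorner (boundary p) z A B := by
  cases h with
  | vertex i =>
    refine ⟨hp.edgeVec_ne_zero _, hp.edgeVec_ne_zero _, ?_⟩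
    filter_upwards [eventually_mem_edge_imp p (p i)] with w hw hwb
    obtain ⟨k, hk⟩ := mem_iUnion.1 hwb
    obtain ⟨t, ht, rfl⟩ := mem_edge_iff.1 hk
    rcases hp.eq_or_eq_of_vertex_mem_edge (hw k hk) with rfl | rfl
    · left
      rw [add_sub_cancel_left]
      exact SameRay.sameRay_nonneg_smul_right _ ht.1
    · right
      have : p k + t • edgeVec p k - p (k + 1) = (1 - t) • -edgeVec p k := by
        rw [edgeVec]; module
      rw [add_sub_cancel_right, this]
      exact SameRay.sameRay_nonneg_smul_right _ (sub_nonneg.2 ht.2)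
  | @inner i _ hz =>
    refine ⟨hp.edgeVec_ne_zero _, hp.edgeVec_ne_zero _, ?_⟩
    filter_upwards [eventually_mem_edge_imp p z] with w hw hwb
    obtain ⟨k, hk⟩ := mem_iUnion.1 hwb
    obtain rfl := hp.eq_of_mem_openSegment hz (hw k hk)
    obtain ⟨s, -, rfl⟩ := mem_edge_iff.1 (hw k hk)
    obtain ⟨t, -, rfl⟩ := mem_edge_iff.1 hk
    have hsub : p k + t • edgeVec p k - (p k + s • edgeVec p k) = (t - s) • edgeVec p k := by module
    rw [hsub]
    rcases le_total s t with hst | hst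
    · exact .inl (SameRay.sameRay_nonneg_smul_right _ (sub_nonneg.2 hst))
    · right
      rw [← neg_sub, neg_smul, ← smul_neg]
      exact SameRay.sameRay_nonneg_smul_right _ (sub_nonneg.2 hst)

lemma left_eq_edgeVec (hp : IsSimple p) (h : IsCorner p z A B) (hz : z ∈ edge p i)
    (hne : z ≠ p i) : A = edgeVec p i := by
  cases h with
  | vertex j =>
    obtain rfl := (hp.eq_or_eq_of_vertex_mem_edge hz).resolve_left fun h => hne (h ▸ rfl)
    rw [add_sub_cancel_right]
  | inner hj => rw [hp.eq_of_mem_openSegment hj hz]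

lemma eventually_disjoint_segment_vertex [NeZero n] (hp : IsSimple p) (h : IsCorner p z A B)
    (hz : z ∈ edge p i) (hne : z ≠ p i) {v : ℂ}
    (hv : v ∈ strictLeft (edgeVec p (i - 1)) (edgeVec p i)) (hu : u ∈ strictLeft A B) :
    ∀ᶠ e : ℝ in 𝓝[>] 0, Disjoint (segment ℝ (p i + e • v) (z + e • u)) (boundary p) := by
  have hc := h.hasCorner hp
  obtain rfl := h.left_eq_edgeVec hp hz hne
  obtain ⟨s, hs, rfl⟩ := mem_edge_iff.1 hz
  have hs0 : 0 < s := hs.1.lt_of_ne (by rintro rfl; simp at hne)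
  have hline : ∀ t : ℝ, AffineMap.lineMap (p i) (p i + s • edgeVec p i) t =
      p i + (t * s) • edgeVec p i := fun t => by
    simp only [AffineMap.lineMap_apply_module']; module
  have hdiff : ∀ t t' : ℝ, p i + (t' * s) • edgeVec p i - (p i + (t * s) • edgeVec p i) =
      (s * (t' - t)) • edgeVec p i := fun t t' => by module
  refine eventually_disjoint_segment (isClosed_boundary p) fun t ht _ => ?_
  simp only [hline, hdiff]
  rcases ht.1.eq_or_lt with rfl | ht0
  · refine ⟨_, _, by simpa using (IsCorner.vertex i).hasCorner hp, by simpa using hv,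
      fun t' ht' => ?_⟩
    exact smul_mem_closedSector (by rw [sub_zero]; exact mul_nonneg hs.1 ht'.1)
      (right_mem_closedSector _ _)
  rcases ht.2.eq_or_lt with rfl | ht1
  · refine ⟨_, _, by rwa [one_mul], by simpa using hu, fun t' ht' => ?_⟩
    rw [← neg_sub, mul_neg, neg_smul, ← smul_neg]
    exact smul_mem_closedSector (mul_nonneg hs.1 (sub_nonneg.2 ht'.2))
      (neg_left_mem_closedSector _ _)
  · have hmem : p i + (t * s) • edgeVec p i ∈ openSegment ℝ (p i) (p (i + 1)) := by
      rw [openSegment_eq_image']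
      exact ⟨t * s, ⟨by positivity, by nlinarith [hs.2]⟩, rfl⟩
    refine ⟨_, _, (IsCorner.inner hmem).hasCorner hp, ?_, fun t' _ => ?_⟩
    · have hpos := (convex_Ioi (0 : ℝ)).lineMap_mem hv.2 hu.1 ht
      rw [← (cross (edgeVec p i)).coe_toAffineMap, ← AffineMap.apply_lineMap] at hpos
      exact ⟨hpos, hpos⟩
    · exact smul_mem_closedSector_self _ _

end IsCorner

/-- The same polygon traversed backwards. -/
def reverse (p : ZMod n → ℂ) (i : ZMod n) : ℂ := p (-i)

lemma reverse_reverse (p : ZMod n → ℂ) : reverse (reverse p) = p :=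
  funext fun i => congrArg p (neg_neg i)

lemma edge_reverse (p : ZMod n → ℂ) (i : ZMod n) : edge (reverse p) i = edge p (-i - 1) := by
  rw [edge, edge, segment_symm, reverse, reverse, neg_add', sub_add_cancel]

lemma boundary_reverse (p : ZMod n → ℂ) : boundary (reverse p) = boundary p := by
  simp only [boundary, edge_reverse]
  exact ((Equiv.neg _).trans (Equiv.subRight 1)).surjective.iUnion_comp (edge p)

lemma edgeVec_reverse (p : ZMod n → ℂ) (i : ZMod n) :
    edgeVec (reverse p) i = -edgeVec p (-i - 1) := by
  rw [edgeVec, edgeVec, reverse, reverse, neg_sub, neg_add', sub_add_cancel]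

lemma IsSimple.reverse (hp : IsSimple p) : IsSimple (reverse p) where
  three_le := hp.three_le
  injective := hp.injective.comp neg_injective
  eq_of_mem_edge {i j x} hij hi hj := by
    rw [edge_reverse] at hi hj
    rcases hp.eq_of_mem_edge (by simpa using hij) hi hj with ⟨h, rfl⟩ | ⟨h, rfl⟩
    · exact .inr ⟨by linear_combination h, congrArg p (by linear_combination h)⟩
    · exact .inl ⟨by linear_combination h, congrArg p (by linear_combination h)⟩

lemma IsCorner.reverse (h : IsCorner p z A B) : IsCorner (reverse p) z (-B) (-A) := by
  cases h with
  | vertex i =>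
    convert IsCorner.vertex (p := PlanePolygon.reverse p) (-i) using 1
    · rw [PlanePolygon.reverse, neg_neg]
    · rw [edgeVec_reverse]; congr 2; ring
    · rw [edgeVec_reverse, neg_neg]
  | @inner i _ hz =>
    have hz' : z ∈ openSegment ℝ (PlanePolygon.reverse p (-i - 1))
        (PlanePolygon.reverse p (-i - 1 + 1)) := by
      rw [openSegment_symm, PlanePolygon.reverse, PlanePolygon.reverse]
      convert hz using 3 <;> ring
    convert IsCorner.inner hz' using 1 <;> rw [edgeVec_reverse] <;> congr 2 <;> ring

/-- The points off the polygon that see it from the left. -/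
def leftSide (p : ZMod n → ℂ) : Set ℂ :=
  {x | x ∉ boundary p ∧
    ∃ z A B, IsCorner p z A B ∧ Sees (boundary p) x z ∧ x - z ∈ closedSector A B}

lemma exists_sees [NeZero n] (p : ZMod n → ℂ) (x : ℂ) :
    ∃ z ∈ boundary p, Sees (boundary p) x z := by
  obtain ⟨z, hz, hdist⟩ := (isCompact_boundary p).exists_infDist_eq_dist
    ⟨_, vertex_mem_boundary p 0⟩ x
  refine ⟨z, hz, fun w hw hwK => ?_⟩
  have hle := infDist_le_dist_of_mem (x := x) hwK
  rw [hdist, ← dist_add_dist_of_mem_segment hw] at hle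
  exact dist_le_zero.1 (by linarith)

lemma sub_mem_closedSector_or_mem_leftSide_reverse (hx : x ∉ boundary p) (hz : IsCorner p z A B)
    (h : Sees (boundary p) x z) :
    x - z ∈ closedSector A B ∨ x ∈ leftSide (reverse p) := by
  refine (mem_closedSector_or_reverse A B (x - z)).imp_right fun hd => ?_
  rw [leftSide, boundary_reverse]
  exact ⟨hx, z, _, _, hz.reverse, h, hd⟩

lemma mem_leftSide_or_mem_leftSide_reverse [NeZero n] (hx : x ∉ boundary p) :
    x ∈ leftSide p ∨ x ∈ leftSide (reverse p) := by
  obtain ⟨z, hz, hsees⟩ := exists_sees p x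
  obtain ⟨A, B, hc⟩ := exists_isCorner hz
  exact (sub_mem_closedSector_or_mem_leftSide_reverse hx hc hsees).imp_left
    fun hd => ⟨hx, z, A, B, hc, hsees, hd⟩

lemma IsCorner.eventually_mem_leftSide [NeZero n] (hp : IsSimple p) (h : IsCorner p z A B)
    (hu : u ∈ strictLeft A B) : ∀ᶠ e : ℝ in 𝓝[>] 0, z + e • u ∈ leftSide p := by
  filter_upwards [(h.hasCorner hp).eventually_sees hu, self_mem_nhdsWithin] with e he hpos
  refine ⟨he.1, z, A, B, h, he.2, ?_⟩
  rw [add_sub_cancel_left]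
  exact smul_mem_closedSector (le_of_lt hpos) (strictLeft_subset_closedSector _ _ hu)

lemma connectedComponentIn_eq_of_disjoint_segment {E : Type*} [AddCommGroup E] [Module ℝ E]
    [TopologicalSpace E] [ContinuousAdd E] [ContinuousSMul ℝ E] {K : Set E} {x y : E}
    (h : Disjoint (segment ℝ x y) K) :
    connectedComponentIn Kᶜ x = connectedComponentIn Kᶜ y :=
  connectedComponentIn_eq ((convex_segment x y).isPreconnected.subset_connectedComponentIn
    (left_mem_segment ℝ x y) h.subset_compl_right (right_mem_segment ℝ x y))

lemma exists_eventually_connectedComponentIn_eq [NeZero n] (hp : IsSimple p) {u : ZMod n → ℂ}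
    (hu : ∀ i, u i ∈ strictLeft (edgeVec p (i - 1)) (edgeVec p i)) (hx : x ∈ leftSide p) :
    ∃ i, ∀ᶠ e : ℝ in 𝓝[>] 0, connectedComponentIn (boundary p)ᶜ x =
      connectedComponentIn (boundary p)ᶜ (p i + e • u i) := by
  obtain ⟨hxb, z, A, B, hc, hsees, hd⟩ := hx
  obtain ⟨v, hv⟩ := hc.strictLeft_nonempty hp
  have toward := fun {w} => (hc.hasCorner hp).eventually_disjoint_segment_of_sees (u := w)
    (isClosed_boundary p) hc.mem_boundary hxb hsees hd
  cases hc with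
  | vertex i =>
    exact ⟨i, (toward (hu i)).mono fun e => connectedComponentIn_eq_of_disjoint_segment⟩
  | @inner i _ hz =>
    have hne : z ≠ p i := by rintro rfl; exact hp.vertex_notMem_openSegment i i hz
    refine ⟨i, ?_⟩
    filter_upwards [toward hv, (IsCorner.inner hz).eventually_disjoint_segment_vertex hp
      (openSegment_subset_segment _ _ _ hz) hne (hu i) hv] with e hxz hzi
    exact (connectedComponentIn_eq_of_disjoint_segment hxz).trans
      (connectedComponentIn_eq_of_disjoint_segment hzi).symm

lemma IsSimple.eventually_disjoint_segment_edge [NeZero n] (hp : IsSimple p) {u : ZMod n → ℂ}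
    (hu : ∀ i, u i ∈ strictLeft (edgeVec p (i - 1)) (edgeVec p i)) (i : ZMod n) :
    ∀ᶠ e : ℝ in 𝓝[>] 0,
      Disjoint (segment ℝ (p i + e • u i) (p (i + 1) + e • u (i + 1))) (boundary p) :=
  (IsCorner.vertex (i + 1)).eventually_disjoint_segment_vertex hp (right_mem_edge p i)
    (hp.injective.ne (by simpa using hp.one_ne_zero)) (hu i) (hu (i + 1))

/-- Walk from `x` to the polygon, once around it slightly to its left, and back out to `y`. -/
lemma connectedComponentIn_eq_of_mem_leftSide [NeZero n] (hp : IsSimple p) {y : ℂ}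
    (hx : x ∈ leftSide p) (hy : y ∈ leftSide p) :
    connectedComponentIn (boundary p)ᶜ x = connectedComponentIn (boundary p)ᶜ y := by
  choose u hu using fun i => (IsCorner.vertex (p := p) i).strictLeft_nonempty hp
  obtain ⟨i, hi⟩ := exists_eventually_connectedComponentIn_eq hp hu hx
  obtain ⟨j, hj⟩ := exists_eventually_connectedComponentIn_eq hp hu hy
  have hedge := eventually_all.2 (hp.eventually_disjoint_segment_edge hu)
  obtain ⟨e, hi, hj, hedge⟩ := (hi.and (hj.and hedge)).exists
  have hperiodic : Function.Periodic
      (fun k => connectedComponentIn (boundary p)ᶜ (p k + e • u k)) 1 :=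
    fun k => (connectedComponentIn_eq_of_disjoint_segment (hedge k)).symm
  rw [hi, hj]
  exact (periodic_one_eq_zero hperiodic i).trans (periodic_one_eq_zero hperiodic j).symm

end Polygon

/-! ### The total angle -/

section Angle

variable {a b x y z w : ℂ}

/-- The angle in `(-π, π]` under which the directed segment from `a` to `b` is seen from `x`. -/
noncomputable def angle (a b x : ℂ) : ℝ := Complex.arg ((b - x) / (a - x))

lemma div_mem_slitPlane (hx : x ∉ segment ℝ a b) : (b - x) / (a - x) ∈ Complex.slitPlane := by
  have hax : a - x ≠ 0 := sub_ne_zero.2 fun h => hx (h ▸ left_mem_segment ℝ a b)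
  by_contra h
  rw [Complex.mem_slitPlane_iff, not_or, not_lt, not_not] at h
  refine hx (mem_segment_iff_sameRay.2 ?_)
  have hb : b - x = (-((b - x) / (a - x)).re) • (x - a) := by
    rw [Complex.real_smul, ← neg_sub a x, Complex.ofReal_neg, neg_mul_neg,
      ← (Complex.ext rfl (by simpa using h.2) :
        (b - x) / (a - x) = (((b - x) / (a - x)).re : ℂ)), div_mul_cancel₀ _ hax]
  rw [hb]
  exact SameRay.sameRay_nonneg_smul_right _ (neg_nonneg.2 h.1)

lemma continuousAt_angle (hx : x ∉ segment ℝ a b) : ContinuousAt (angle a b) x := by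
  have hax : a - x ≠ 0 := sub_ne_zero.2 fun h => hx (h ▸ left_mem_segment ℝ a b)
  exact (Complex.continuousAt_arg (div_mem_slitPlane hx)).comp
    (f := fun y => (b - y) / (a - y)) (by fun_prop (disch := exact hax))

lemma angle_swap (hx : x ∉ segment ℝ a b) : angle b a x = -angle a b x := by
  rw [angle, angle, ← inv_div, Complex.arg_inv,
    if_neg (Complex.mem_slitPlane_iff_arg.1 (div_mem_slitPlane hx)).1]

lemma angle_eq_arg_sub_arg (ha : 0 < ((a - x) * w).re) (hb : 0 < ((b - x) * w).re) :
    angle a b x = Complex.arg ((b - x) * w) - Complex.arg ((a - x) * w) := by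
  have hne : ∀ {v : ℂ}, 0 < v.re → v ≠ 0 := by rintro _ h rfl; simp at h
  have hw : w ≠ 0 := right_ne_zero_of_mul (hne ha)
  have hargb := abs_lt.1 (Complex.abs_arg_lt_pi_div_two_iff.2 (.inl hb))
  have harga := abs_lt.1 (Complex.abs_arg_lt_pi_div_two_iff.2 (.inl ha))
  have hinv : Complex.arg ((a - x) * w)⁻¹ = -Complex.arg ((a - x) * w) := by
    rw [Complex.arg_inv, if_neg (by linarith [Real.pi_pos])]
  rw [angle, ← mul_div_mul_right _ _ hw, div_eq_mul_inv,
    Complex.arg_mul (hne hb) (inv_ne_zero (hne ha))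
      (by rw [hinv]; constructor <;> linarith [Real.pi_pos]), hinv, ← sub_eq_add_neg]

lemma im_div_eq_cross_div (x y : ℂ) : (y / x).im = cross x y / Complex.normSq x := by
  rw [Complex.div_im, cross_apply]
  ring

lemma tendsto_angle_of_cross_pos (hz : z ∈ openSegment ℝ a b) (hw : 0 < cross (b - a) w) :
    Tendsto (fun e : ℝ => angle a b (z + e • w)) (𝓝[>] 0) (𝓝 Real.pi) := by
  have hab : a ≠ b := by rintro rfl; simp at hw
  have hza : a - z ≠ 0 := by
    rw [sub_ne_zero]; rintro rfl; exact hab (left_mem_openSegment_iff.1 hz)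
  rw [openSegment_eq_image'] at hz
  obtain ⟨t, ht, rfl⟩ := hz
  simp only at hza ⊢
  set z := a + t • (b - a)
  have hlim : (b - z) / (a - z) = (-((1 - t) / t) : ℝ) := by
    rw [div_eq_iff hza]
    have : (t : ℂ) ≠ 0 := by exact_mod_cast ht.1.ne'
    simp only [z, Complex.real_smul]
    push_cast
    field_simp
    ring
  have hcont : ContinuousAt (fun x => (b - x) / (a - x)) z := by fun_prop (disch := exact hza)
  have hquot : Tendsto (fun e : ℝ => (b - (z + e • w)) / (a - (z + e • w))) (𝓝[>] 0)
      (𝓝[{v : ℂ | 0 ≤ v.im}] (-((1 - t) / t) : ℝ)) := by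
    refine tendsto_nhdsWithin_iff.2 ⟨hlim ▸ hcont.tendsto.comp (tendsto_add_smul z w), ?_⟩
    filter_upwards [self_mem_nhdsWithin] with e (he : 0 < e)
    have hcross : cross (a - (z + e • w)) (b - (z + e • w)) = e * cross (b - a) w := by
      simp only [cross_apply, z, Complex.add_re, Complex.add_im, Complex.sub_re, Complex.sub_im,
        Complex.smul_re, Complex.smul_im, smul_eq_mul]
      ring
    rw [im_div_eq_cross_div, hcross]
    exact div_nonneg (mul_pos he hw).le (Complex.normSq_nonneg _)
  have hneg : (-((1 - t) / t) : ℝ) < 0 := neg_lt_zero.2 (div_pos (sub_pos.2 ht.2) ht.1)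
  exact (Complex.tendsto_arg_nhdsWithin_im_nonneg_of_re_neg_of_im_zero
    (by simpa using hneg) (Complex.ofReal_im _)).comp hquot

end Angle

section TotalAngle

variable {n : ℕ} [NeZero n] {p : ZMod n → ℂ} {i : ZMod n} {x y z w A B u : ℂ}

/-- The total angle swept out by a point going around the polygon, as seen from `x`. It is `2π`
times the winding number. -/
noncomputable def totalAngle (p : ZMod n → ℂ) (x : ℂ) : ℝ := ∑ i, angle (p i) (p (i + 1)) x

lemma sum_add_one {M : Type*} [AddCommMonoid M] (f : ZMod n → M) : ∑ i, f (i + 1) = ∑ i, f i :=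
  Equiv.sum_comp (Equiv.addRight 1) f

lemma continuousAt_totalAngle (hx : x ∉ boundary p) : ContinuousAt (totalAngle p) x :=
  tendsto_finsetSum _ fun i _ => continuousAt_angle fun h => hx (edge_subset_boundary p i h)

lemma totalAngle_mem_zmultiples (hx : x ∉ boundary p) :
    totalAngle p x ∈ AddSubgroup.zmultiples (2 * Real.pi) := by
  have hne : ∀ i, p i - x ≠ 0 := fun i =>
    sub_ne_zero.2 fun h => hx (h ▸ vertex_mem_boundary p i)
  have hzero : (totalAngle p x : Real.Angle) = 0 := by
    rw [totalAngle, ← Real.Angle.coe_coeHom, map_sum]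
    simp only [angle, Real.Angle.coe_coeHom, Complex.arg_div_coe_angle (hne _) (hne _),
      Finset.sum_sub_distrib]
    rw [sum_add_one fun i => (Complex.arg (p i - x) : Real.Angle), sub_self]
  obtain ⟨m, hm⟩ := Real.Angle.coe_eq_zero_iff.1 hzero
  exact ⟨m, hm⟩

lemma totalAngle_eq_of_mem_connectedComponentIn (hx : x ∉ boundary p)
    (hy : y ∈ connectedComponentIn (boundary p)ᶜ x) : totalAngle p y = totalAngle p x :=
  isPreconnected_connectedComponentIn.constant_of_mapsTo
    (T := (AddSubgroup.zmultiples (2 * Real.pi) : Set ℝ))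
    (isDiscrete_iff_discreteTopology.2
      (inferInstanceAs (DiscreteTopology (AddSubgroup.zmultiples (2 * Real.pi)))))
    (fun _ hz => (continuousAt_totalAngle
      (connectedComponentIn_subset _ _ hz)).continuousWithinAt)
    (fun _ hz => totalAngle_mem_zmultiples (connectedComponentIn_subset _ _ hz))
    hy (mem_connectedComponentIn hx)

lemma totalAngle_reverse (hx : x ∉ boundary p) :
    totalAngle (reverse p) x = -totalAngle p x := by
  rw [totalAngle, totalAngle, ← Finset.sum_neg_distrib,
    ← Equiv.sum_comp ((Equiv.neg _).trans (Equiv.subRight 1)) fun i => -angle (p i) (p (i + 1)) x]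
  refine Finset.sum_congr rfl fun i _ => ?_
  have h := angle_swap fun h => hx (edge_subset_boundary p (-i - 1) h)
  simpa only [Equiv.trans_apply, Equiv.neg_apply, Equiv.subRight_apply, reverse, neg_add',
    sub_add_cancel] using h

lemma totalAngle_eq_zero_of_re_pos (h : ∀ i, 0 < ((p i - x) * w).re) : totalAngle p x = 0 := by
  rw [totalAngle, Finset.sum_congr rfl fun i _ => angle_eq_arg_sub_arg (h i) (h (i + 1)),
    Finset.sum_sub_distrib, sum_add_one fun i => Complex.arg ((p i - x) * w), sub_self]

lemma totalAngle_eq_zero_of_notMem_convexHull (hx : x ∉ convexHull ℝ (range p)) :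
    totalAngle p x = 0 := by
  obtain ⟨f, a, hfx, hf⟩ := geometric_hahn_banach_point_closed (convex_convexHull ℝ _)
    ((finite_range p).isClosed_convexHull ℝ) hx
  obtain ⟨v, rfl⟩ := (InnerProductSpace.toDual ℝ ℂ).surjective f
  refine totalAngle_eq_zero_of_re_pos (w := starRingEnd ℂ v) fun i => ?_
  have hi := hfx.trans (hf _ (subset_convexHull ℝ _ (mem_range_self i)))
  rw [InnerProductSpace.toDual_apply_apply, InnerProductSpace.toDual_apply_apply, ← sub_pos,
    ← inner_sub_right, Complex.inner] at hi
  simpa only [mul_comm] using hi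

lemma tendsto_totalAngle (hp : IsSimple p) (hz : z ∈ openSegment ℝ (p i) (p (i + 1))) {L : ℝ}
    (h : Tendsto (fun e : ℝ => angle (p i) (p (i + 1)) (z + e • w)) (𝓝[>] 0) (𝓝 L)) :
    Tendsto (fun e : ℝ => totalAngle p (z + e • w)) (𝓝[>] 0)
      (𝓝 (L + ∑ k ∈ Finset.univ.erase i, angle (p k) (p (k + 1)) z)) := by
  simp only [totalAngle, ← Finset.add_sum_erase _ _ (Finset.mem_univ i)]
  refine h.add (tendsto_finsetSum _ fun k hk => ?_)
  refine (continuousAt_angle fun hmem => ?_).tendsto.comp (tendsto_add_smul z w)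
  exact Finset.ne_of_mem_erase hk (hp.eq_of_mem_openSegment hz hmem)

lemma totalAngle_eq_of_mem_leftSide (hp : IsSimple p) (hx : x ∈ leftSide p)
    (hy : y ∈ leftSide p) : totalAngle p x = totalAngle p y :=
  totalAngle_eq_of_mem_connectedComponentIn hy.1
    (connectedComponentIn_eq_of_mem_leftSide hp hy hx ▸ mem_connectedComponentIn hx.1)

lemma totalAngle_eq_of_mem_leftSide_reverse (hp : IsSimple p) (hx : x ∈ leftSide (reverse p))
    (hy : y ∈ leftSide (reverse p)) : totalAngle p x = totalAngle p y := by
  have h := totalAngle_eq_of_mem_leftSide hp.reverse hx hy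
  rwa [totalAngle_reverse (boundary_reverse p ▸ hx.1),
    totalAngle_reverse (boundary_reverse p ▸ hy.1), neg_inj] at h

/-- Crossing an edge changes the angle under which it is seen from `π` to `-π`, whereas the angles
of the other edges vary continuously. -/
lemma totalAngle_sub_totalAngle (hp : IsSimple p) (hx : x ∈ leftSide p)
    (hy : y ∈ leftSide (reverse p)) : totalAngle p x - totalAngle p y = 2 * Real.pi := by
  obtain ⟨z, hz⟩ : (openSegment ℝ (p 0) (p (0 + 1))).Nonempty :=
    ⟨_, midpoint_mem_openSegment (p 0) (p (0 + 1))⟩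
  have hw := cross_I_mul_self_pos (hp.edgeVec_ne_zero 0)
  have hc := IsCorner.inner hz
  set w := Complex.I * edgeVec p 0
  have hleft := tendsto_totalAngle hp hz (tendsto_angle_of_cross_pos hz hw)
  have hright := tendsto_totalAngle (w := -w) (L := -Real.pi) hp hz <| by
    refine (tendsto_angle_of_cross_pos (w := -w) (openSegment_symm ℝ (p 0) _ ▸ hz) ?_).neg.congr' ?_
    · rw [← neg_sub, map_neg, map_neg, LinearMap.neg_apply, neg_neg]
      exact hw
    · filter_upwards [hc.reverse.eventually_mem_leftSide hp.reverse
        (neg_mem_strictLeft_reverse ⟨hw, hw⟩)] with e he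
      rw [angle_swap fun h => (boundary_reverse p ▸ he.1) (edge_subset_boundary p 0 h), neg_neg]
  have hxlim := tendsto_nhds_unique hleft <| tendsto_const_nhds.congr' <|
    (hc.eventually_mem_leftSide hp ⟨hw, hw⟩).mono fun e he =>
      totalAngle_eq_of_mem_leftSide hp hx he
  have hylim := tendsto_nhds_unique hright <| tendsto_const_nhds.congr' <|
    (hc.reverse.eventually_mem_leftSide hp.reverse
      (neg_mem_strictLeft_reverse ⟨hw, hw⟩)).mono fun e he =>
        totalAngle_eq_of_mem_leftSide_reverse hp hy he
  rw [← hxlim, ← hylim]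
  ring

/-- A simple polygon that is traversed counterclockwise, i.e. with its interior on its left. -/
structure IsCCW (p : ZMod n → ℂ) : Prop extends IsSimple p where
  totalAngle_eq_two_pi : ∀ {x}, x ∈ leftSide p → totalAngle p x = 2 * Real.pi

lemma leftSide_nonempty (hp : IsSimple p) : (leftSide p).Nonempty := by
  obtain ⟨u, hu⟩ := (IsCorner.vertex (p := p) 0).strictLeft_nonempty hp
  obtain ⟨e, he⟩ := ((IsCorner.vertex (p := p) 0).eventually_mem_leftSide hp hu).exists
  exact ⟨_, he⟩

lemma IsCCW.totalAngle_eq_zero (hp : IsCCW p) (hx : x ∈ leftSide (reverse p)) :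
    totalAngle p x = 0 := by
  obtain ⟨y, hy⟩ := leftSide_nonempty hp.toIsSimple
  linarith [totalAngle_sub_totalAngle hp.toIsSimple hy hx, hp.totalAngle_eq_two_pi hy]

lemma isBounded_convexHull_range (p : ZMod n → ℂ) :
    Bornology.IsBounded (convexHull ℝ (range p)) :=
  isBounded_convexHull.2 (finite_range p).isBounded

lemma IsSimple.isCCW_or_isCCW_reverse (hp : IsSimple p) :
    IsCCW p ∨ IsCCW (PlanePolygon.reverse p) := by
  obtain ⟨x, hx⟩ : (convexHull ℝ (range p))ᶜ.Nonempty := by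
    rw [nonempty_compl]
    exact fun h => NormedSpace.unbounded_univ ℝ ℂ (h ▸ isBounded_convexHull_range p)
  have hzero := totalAngle_eq_zero_of_notMem_convexHull hx
  rcases mem_leftSide_or_mem_leftSide_reverse fun h => hx (boundary_subset_convexHull p h)
    with hleft | hleft
  · refine .inr ⟨hp.reverse, fun {y} hy => ?_⟩
    rw [totalAngle_reverse (boundary_reverse p ▸ hy.1)]
    linarith [totalAngle_sub_totalAngle hp hleft hy]
  · exact .inl ⟨hp, fun {y} hy => by linarith [totalAngle_sub_totalAngle hp hy hleft]⟩

/-- The points around which the polygon winds. -/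
def inside (p : ZMod n → ℂ) : Set ℂ := {x | x ∉ boundary p ∧ totalAngle p x ≠ 0}

lemma inside_reverse (p : ZMod n → ℂ) : inside (reverse p) = inside p := by
  ext x
  simp only [inside, boundary_reverse, mem_ofPred_eq]
  exact and_congr_right fun hx => by rw [totalAngle_reverse hx, neg_ne_zero]

lemma isOpen_inside (p : ZMod n → ℂ) : IsOpen (inside p) :=
  isOpen_iff_eventually.2 fun _ hx => ((isClosed_boundary p).isOpen_compl.eventually_mem hx.1).and
    ((continuousAt_totalAngle hx.1).eventually_ne hx.2)

lemma inside_subset_convexHull (p : ZMod n → ℂ) : inside p ⊆ convexHull ℝ (range p) :=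
  fun _ hx => by_contra fun h => hx.2 (totalAngle_eq_zero_of_notMem_convexHull h)

lemma connectedComponentIn_subset_inside (hx : x ∈ inside p) :
    connectedComponentIn (boundary p)ᶜ x ⊆ inside p := fun _ hy =>
  ⟨connectedComponentIn_subset _ _ hy,
    (totalAngle_eq_of_mem_connectedComponentIn hx.1 hy).trans_ne hx.2⟩

lemma subset_inside_of_isPreconnected {s : Set ℂ} (hs : IsPreconnected s)
    (hdisj : Disjoint s (boundary p)) (hxs : x ∈ s) (hx : x ∈ inside p) : s ⊆ inside p :=
  (hs.subset_connectedComponentIn hxs hdisj.subset_compl_right).trans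
    (connectedComponentIn_subset_inside hx)

namespace IsCCW

lemma inside_eq_leftSide (hp : IsCCW p) : inside p = leftSide p := by
  ext x
  refine ⟨fun hx => (mem_leftSide_or_mem_leftSide_reverse hx.1).resolve_right fun h =>
    hx.2 (hp.totalAngle_eq_zero h), fun hx => ⟨hx.1, ?_⟩⟩
  rw [hp.totalAngle_eq_two_pi hx]
  exact Real.two_pi_pos.ne'

lemma sub_mem_closedSector (hp : IsCCW p) (hx : x ∈ inside p) (hz : IsCorner p z A B)
    (h : Sees (boundary p) x z) : x - z ∈ closedSector A B :=
  (sub_mem_closedSector_or_mem_leftSide_reverse hx.1 hz h).resolve_right fun h =>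
    hx.2 (hp.totalAngle_eq_zero h)

lemma mem_inside_of_sees (hp : IsCCW p) (hx : x ∉ boundary p) (hz : IsCorner p z A B)
    (h : Sees (boundary p) x z) (hd : x - z ∈ closedSector A B) : x ∈ inside p :=
  hp.inside_eq_leftSide ▸ ⟨hx, z, A, B, hz, h, hd⟩

lemma eventually_mem_inside (hp : IsCCW p) (h : IsCorner p z A B) (hu : u ∈ strictLeft A B) :
    ∀ᶠ e : ℝ in 𝓝[>] 0, z + e • u ∈ inside p :=
  hp.inside_eq_leftSide ▸ h.eventually_mem_leftSide hp.toIsSimple hu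

lemma boundary_subset_closure_inside (hp : IsCCW p) : boundary p ⊆ closure (inside p) := by
  intro z hz
  obtain ⟨A, B, hc⟩ := exists_isCorner hz
  obtain ⟨u, hu⟩ := hc.strictLeft_nonempty hp.toIsSimple
  exact mem_closure_of_tendsto (tendsto_add_smul z u) (hp.eventually_mem_inside hc hu)

end IsCCW

end TotalAngle

/-! ### Existence of diagonals -/

section Diagonal

variable {n : ℕ} {p : ZMod n → ℂ} {i j k : ZMod n} {x z A B : ℂ}

lemma inner_sub_pos_of_norm_le {E : Type*} [NormedAddCommGroup E] [InnerProductSpace ℝ E] {o w : E}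
    (h : ‖w‖ ≤ ‖o‖) (hne : w ≠ o) : 0 < inner ℝ o (o - w) := by
  have hpos := norm_pos_iff.2 (sub_ne_zero.2 hne.symm)
  have hsq := pow_le_pow_left₀ (norm_nonneg w) h 2
  have := norm_sub_sq_real o w
  rw [inner_sub_right, real_inner_self_eq_norm_sq]
  nlinarith

lemma IsSimple.vertex_ne_zero_of_forall_norm_le (hp : IsSimple p) (hmax : ∀ j, ‖p j‖ ≤ ‖p i‖) :
    p i ≠ 0 := by
  intro h
  have hnext := hmax (i + 1)
  rw [h, norm_zero, norm_le_zero_iff, ← h] at hnext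
  exact hp.injective.ne (by simpa using hp.one_ne_zero) hnext

/-- Otherwise the points behind the farthest vertex would be inside, but they are outside the convex
hull. -/
lemma IsCCW.notMem_closedSector_of_forall_norm_le [NeZero n] (hp : IsCCW p)
    (hmax : ∀ j, ‖p j‖ ≤ ‖p i‖) : p i ∉ closedSector (edgeVec p (i - 1)) (edgeVec p i) := by
  have hpos := norm_pos_iff.2 (hp.vertex_ne_zero_of_forall_norm_le hmax)
  have hball : convexHull ℝ (range p) ⊆ closedBall 0 ‖p i‖ :=
    convexHull_min (range_subset_iff.2 fun j => by simpa using hmax j) (convex_closedBall _ _)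
  have hout : ∀ t : ℝ, 0 < t → p i + t • p i ∉ convexHull ℝ (range p) := fun t ht h => by
    have hnorm : p i + t • p i = (1 + t) • p i := by module
    have := mem_closedBall_zero_iff.1 (hball h)
    rw [hnorm, norm_smul, Real.norm_of_nonneg (by linarith)] at this
    nlinarith
  have hsees : Sees (boundary p) (p i + p i) (p i) := by
    intro x hx hxb
    rw [segment_symm, segment_eq_image'] at hx
    obtain ⟨t, ht, rfl⟩ := hx
    simp only [add_sub_cancel_left] at hxb ⊢
    rcases ht.1.eq_or_lt with rfl | ht
    · rw [zero_smul, add_zero]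
    · exact absurd (boundary_subset_convexHull p hxb) (hout t ht)
  have hout1 := one_smul ℝ (p i) ▸ hout 1 one_pos
  exact fun h => hout1 <| inside_subset_convexHull p <|
    hp.mem_inside_of_sees (fun hb => hout1 (boundary_subset_convexHull p hb)) (.vertex i) hsees
      (by rwa [add_sub_cancel_left])

lemma IsCCW.exists_cross_pos [NeZero n] (hp : IsCCW p) :
    ∃ i, 0 < cross (edgeVec p (i - 1)) (edgeVec p i) := by
  obtain ⟨i, hmax⟩ := Finite.exists_max fun i => ‖p i‖
  have hsector := hp.notMem_closedSector_of_forall_norm_le hmax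
  have hA : 0 < inner ℝ (p i) (edgeVec p (i - 1)) := edgeVec_sub_one p i ▸
    inner_sub_pos_of_norm_le (hmax _) (hp.injective.ne (by simpa using hp.one_ne_zero))
  have hB : 0 < inner ℝ (p i) (-edgeVec p i) := neg_sub (p (i + 1)) (p i) ▸
    inner_sub_pos_of_norm_le (hmax _) (hp.injective.ne (by simpa using hp.one_ne_zero))
  rw [inner_neg_right] at hB
  refine ⟨i, by_contra fun hAB => ?_⟩
  simp only [closedSector, mem_ofPred_eq, if_neg hAB, not_or, not_le] at hsector
  rw [cross_swap _ (p i), cross_swap _ (p i)] at hsector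
  nlinarith [inner_mul_cross_sub (p i) (edgeVec p (i - 1)) (edgeVec p i), sq_nonneg ‖p i‖]

/-- An open segment between two vertices that lies inside the polygon. Such vertices are
automatically distinct and not adjacent. -/
def IsDiagonal [NeZero n] (p : ZMod n → ℂ) (i j : ZMod n) : Prop :=
  openSegment ℝ (p i) (p j) ⊆ inside p

/-- Up to a factor, the distance of `z` from the parallel through `p i` to the line joining its
neighbours. -/
noncomputable def depth (p : ZMod n → ℂ) (i : ZMod n) (z : ℂ) : ℝ :=
  cross (edgeVec p (i - 1) + edgeVec p i) (z - p i)

lemma depth_eq_add (p : ZMod n → ℂ) (i : ZMod n) (z : ℂ) :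
    depth p i z = cross (edgeVec p (i - 1)) (z - p i) + cross (edgeVec p i) (z - p i) := by
  rw [depth, map_add, LinearMap.add_apply]

lemma depth_next (p : ZMod n → ℂ) (i : ZMod n) :
    depth p i (p (i + 1)) = cross (edgeVec p (i - 1)) (edgeVec p i) := by
  rw [depth_eq_add, ← edgeVec, cross_self, add_zero]

lemma depth_prev (p : ZMod n → ℂ) (i : ZMod n) :
    depth p i (p (i - 1)) = cross (edgeVec p (i - 1)) (edgeVec p i) := by
  rw [depth_eq_add, ← neg_sub (p i), ← edgeVec_sub_one, map_neg, map_neg, cross_self, neg_zero,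
    zero_add, ← cross_swap]

lemma mem_closedSector_iff (h : 0 < cross A B) :
    z ∈ closedSector A B ↔ 0 ≤ cross A z ∧ 0 ≤ cross B z := by
  rw [closedSector, mem_ofPred_eq, if_pos h]

lemma cross_eq_zero_of_mem_edge (hz : z ∈ edge p i) : cross (edgeVec p i) (z - p i) = 0 := by
  obtain ⟨t, -, rfl⟩ := mem_edge_iff.1 hz
  rw [add_sub_cancel_left, map_smul, cross_self, smul_zero]

lemma cross_eq_zero_of_mem_edge_sub_one (hz : z ∈ edge p (i - 1)) :
    cross (edgeVec p (i - 1)) (z - p i) = 0 := by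
  have h := cross_eq_zero_of_mem_edge hz
  rwa [← sub_add_sub_cancel _ (p (i - 1)), ← neg_sub (p i) (p (i - 1)), ← edgeVec_sub_one, map_add,
    map_neg, cross_self, neg_zero, add_zero]

lemma mem_edge_or_mem_edge_sub_one (hturn : 0 < cross (edgeVec p (i - 1)) (edgeVec p i))
    (hz : z - p i ∈ closedSector (edgeVec p (i - 1)) (edgeVec p i))
    (hdepth : depth p i z ≤ cross (edgeVec p (i - 1)) (edgeVec p i))
    (hzero : cross (edgeVec p (i - 1)) (z - p i) = 0 ∨ cross (edgeVec p i) (z - p i) = 0) :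
    z ∈ edge p i ∨ z ∈ edge p (i - 1) := by
  rw [mem_closedSector_iff hturn] at hz
  rw [depth_eq_add] at hdepth
  have hswap := cross_swap (edgeVec p i) (edgeVec p (i - 1))
  rcases hzero with hzero | hzero
  · right
    obtain ⟨t, ht⟩ := exists_eq_smul_of_cross_eq_zero (by rintro h; simp [h] at hturn) hzero
    rw [ht, map_smul, map_smul, cross_self, smul_eq_mul, smul_eq_mul] at hdepth hz
    refine mem_edge_iff.2 ⟨1 + t, ⟨by nlinarith, by nlinarith⟩, ?_⟩
    rw [← sub_add_cancel z (p i), ht, add_smul, one_smul, edgeVec_sub_one]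
    ring
  · left
    obtain ⟨t, ht⟩ := exists_eq_smul_of_cross_eq_zero (by rintro h; simp [h] at hturn) hzero
    rw [ht, map_smul, map_smul, cross_self, smul_eq_mul, smul_eq_mul] at hdepth hz
    exact mem_edge_iff.2 ⟨t, ⟨by nlinarith, by nlinarith⟩, by rw [← ht, add_sub_cancel]⟩

lemma exists_endpoint_depth_le (hz : z ∈ edge p k) :
    ∃ j, (j = k ∨ j = k + 1) ∧ depth p i (p j) ≤ depth p i z := by
  by_contra! h
  have hconv : Convex ℝ {w | depth p i z < depth p i w} := by
    simp only [depth, map_sub, sub_lt_sub_iff_right]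
    exact convex_halfSpace_gt (LinearMap.isLinear _) _
  exact lt_irrefl (depth p i z) (hconv.segment_subset (h k (.inl rfl)) (h _ (.inr rfl)) hz)

/-- A segment that leaves the cone at `p i` without getting deeper leaves it through one of the two
edges at `p i`. -/
lemma exists_mem_segment_mem_edge {y : ℂ}
    (hturn : 0 < cross (edgeVec p (i - 1)) (edgeVec p i))
    (hz : z - p i ∈ strictLeft (edgeVec p (i - 1)) (edgeVec p i))
    (hdepth : depth p i z ≤ cross (edgeVec p (i - 1)) (edgeVec p i))
    (hy : y - p i ∉ closedSector (edgeVec p (i - 1)) (edgeVec p i))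
    (hyz : depth p i y ≤ depth p i z) :
    ∃ w ∈ segment ℝ z y, (w ∈ edge p i ∨ w ∈ edge p (i - 1)) ∧
      w - p i ∈ closedSector (edgeVec p (i - 1)) (edgeVec p i) ∧ depth p i w ≤ depth p i z := by
  rw [mem_closedSector_iff hturn, not_and_or, not_le, not_le, ← min_lt_iff] at hy
  have hconv : Convex ℝ {w | depth p i w ≤ depth p i z} := by
    simp only [depth, map_sub, sub_le_sub_iff_right]
    exact convex_halfSpace_le (LinearMap.isLinear _) _
  obtain ⟨w, hw, hmin⟩ := (convex_segment z y).isPreconnected.intermediate_value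
    (right_mem_segment ℝ z y) (left_mem_segment ℝ z y)
    (f := fun w => min (cross (edgeVec p (i - 1)) (w - p i)) (cross (edgeVec p i) (w - p i)))
    (by have := continuous_cross (edgeVec p (i - 1)); have := continuous_cross (edgeVec p i)
        fun_prop) ⟨hy.le, (lt_min hz.1 hz.2).le⟩
  have hwsec := (mem_closedSector_iff hturn).2 (le_min_iff.1 hmin.ge)
  have hwdepth := hconv.segment_subset (le_refl (depth p i z)) hyz hw
  refine ⟨w, hw, mem_edge_or_mem_edge_sub_one hturn hwsec (hwdepth.trans hdepth) ?_, hwsec, hwdepth⟩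
  exact (min_choice _ _).imp (fun h => h.symm.trans hmin) fun h => h.symm.trans hmin

lemma IsSimple.exists_vertex_depth_le (hp : IsSimple p)
    (hturn : 0 < cross (edgeVec p (i - 1)) (edgeVec p i)) (hzk : z ∈ edge p k)
    (hz : z - p i ∈ strictLeft (edgeVec p (i - 1)) (edgeVec p i))
    (hdepth : depth p i z ≤ cross (edgeVec p (i - 1)) (edgeVec p i)) :
    ∃ j ≠ i, p j ∈ edge p k ∧ p j - p i ∈ closedSector (edgeVec p (i - 1)) (edgeVec p i) ∧
      depth p i (p j) ≤ depth p i z := by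
  have hki : k ≠ i := by rintro rfl; exact hz.2.ne' (cross_eq_zero_of_mem_edge hzk)
  have hki' : k ≠ i - 1 := by rintro rfl; exact hz.1.ne' (cross_eq_zero_of_mem_edge_sub_one hzk)
  obtain ⟨m, hm, hmz⟩ := exists_endpoint_depth_le (i := i) hzk
  have hmk : p m ∈ edge p k := by
    rcases hm with rfl | rfl
    exacts [left_mem_edge p m, right_mem_edge p k]
  by_cases hsec : p m - p i ∈ closedSector (edgeVec p (i - 1)) (edgeVec p i)
  · refine ⟨m, ?_, hmk, hsec, hmz⟩
    rintro rfl
    exact hm.elim (fun h => hki h.symm) fun h => hki' (eq_sub_of_add_eq h.symm)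
  obtain ⟨w, hw, hwedge, hwsec, hwdepth⟩ := exists_mem_segment_mem_edge hturn hz hdepth hsec hmz
  have hwk : w ∈ edge p k := (convex_segment _ _).segment_subset hzk hmk hw
  suffices ∃ j ≠ i, w = p j by
    obtain ⟨j, hj, rfl⟩ := this
    exact ⟨j, hj, hwk, hwsec, hwdepth⟩
  rcases hwedge with hwi | hwi
  · rcases hp.eq_of_mem_edge hki.symm hwi hwk with h | h
    · exact ⟨k, hki, h.2⟩
    · exact absurd (eq_sub_of_add_eq h.1.symm) hki'
  · rcases hp.eq_of_mem_edge hki'.symm hwi hwk with h | h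
    · exact absurd (h.1.trans (sub_add_cancel i 1)) hki
    · exact ⟨i - 1, by simpa using hp.one_ne_zero, h.2⟩

lemma IsCCW.openSegment_subset_inside [NeZero n] (hp : IsCCW p) (hz : IsCorner p z A B)
    (hx : x - z ∈ strictLeft A B) (hdisj : Disjoint (openSegment ℝ z x) (boundary p)) :
    openSegment ℝ z x ⊆ inside p := by
  obtain ⟨e, hin, he⟩ := ((hp.eventually_mem_inside hz hx).and (Ioo_mem_nhdsGT one_pos)).exists
  refine subset_inside_of_isPreconnected (convex_openSegment z x).isPreconnected hdisj ?_ hin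
  rw [openSegment_eq_image']
  exact ⟨e, he, rfl⟩

/-- The diagonal joins `p i` to a shallowest vertex in the ear at `p i`. -/
lemma IsCCW.exists_isDiagonal_of_vertex_mem [NeZero n] (hp : IsCCW p)
    (hturn : 0 < cross (edgeVec p (i - 1)) (edgeVec p i))
    (h : ∃ j, (j ≠ i ∧ j ≠ i - 1 ∧ j ≠ i + 1) ∧
      p j - p i ∈ closedSector (edgeVec p (i - 1)) (edgeVec p i) ∧
      depth p i (p j) ≤ cross (edgeVec p (i - 1)) (edgeVec p i)) :
    ∃ j, IsDiagonal p i j := by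
  obtain ⟨j, ⟨⟨hji, hjprev, hjnext⟩, hjsec, hjdepth⟩, hmin⟩ :=
    exists_min_image _ (fun j => depth p i (p j)) (toFinite _) h
  have hstrict : p j - p i ∈ strictLeft (edgeVec p (i - 1)) (edgeVec p i) := by
    have hzero : ¬ (cross (edgeVec p (i - 1)) (p j - p i) = 0 ∨
        cross (edgeVec p i) (p j - p i) = 0) := fun hzero => by
      rcases mem_edge_or_mem_edge_sub_one hturn hjsec hjdepth hzero with h | h <;>
        have := hp.eq_or_eq_of_vertex_mem_edge h <;> simp_all
    rw [not_or] at hzero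
    exact ⟨((mem_closedSector_iff hturn).1 hjsec).1.lt_of_ne' hzero.1,
      ((mem_closedSector_iff hturn).1 hjsec).2.lt_of_ne' hzero.2⟩
  have hdepth_pos : 0 < depth p i (p j) := by
    rw [depth_eq_add]; exact add_pos hstrict.1 hstrict.2
  refine ⟨j, hp.openSegment_subset_inside (.vertex i) hstrict (Set.disjoint_left.2 ?_)⟩
  rintro z hz hzb
  obtain ⟨k, hzk⟩ := mem_iUnion.1 hzb
  rw [openSegment_eq_image'] at hz
  obtain ⟨t, ht, rfl⟩ := hz
  have hlt : depth p i (p i + t • (p j - p i)) < depth p i (p j) := by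
    rw [depth, depth, add_sub_cancel_left, map_smul, smul_eq_mul]
    exact mul_lt_of_lt_one_left hdepth_pos ht.2
  obtain ⟨m, hmi, -, hmsec, hmle⟩ := hp.exists_vertex_depth_le hturn hzk
    (by rw [add_sub_cancel_left]; exact smul_mem_strictLeft ht.1 hstrict) (hlt.le.trans hjdepth)
  have hmlt := hmle.trans_lt hlt
  refine absurd (hmin m ⟨⟨hmi, ?_, ?_⟩, hmsec, (hmlt.trans_le hjdepth).le⟩) (not_le.2 hmlt)
  · rintro rfl; exact (hmlt.trans_le hjdepth).ne (depth_prev p i)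
  · rintro rfl; exact (hmlt.trans_le hjdepth).ne (depth_next p i)

lemma mem_segment_or_mem_segment {E : Type*} [AddCommGroup E] [Module ℝ E] {a b q z : E}
    (hz : z ∈ openSegment ℝ a b) (hq : z ∈ segment ℝ a q) (hab : a ≠ b) :
    q ∈ segment ℝ a b ∨ b ∈ segment ℝ a q := by
  have hza : z - a ≠ 0 := by
    rw [sub_ne_zero]; rintro rfl; exact hab (left_mem_openSegment_iff.1 hz)
  have hray : ∀ {y}, z ∈ segment ℝ a y → SameRay ℝ (z - a) (y - a) := fun h =>
    (mem_segment_iff_wbtw.1 h).sameRay_vsub_left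
  have hqb : SameRay ℝ (q -ᵥ a) (b -ᵥ a) := (hray hq).symm.trans
    (hray (openSegment_subset_segment ℝ _ _ hz)) fun h => absurd h hza
  exact (wbtw_total_of_sameRay_vsub_left hqb).imp mem_segment_iff_wbtw.2 mem_segment_iff_wbtw.2

lemma IsSimple.right_mem_edge_of_left_mem_edge {a b : ZMod n} (hp : IsSimple p) (hab : a ≠ b)
    (hvert : ∀ m, p m ∈ segment ℝ (p a) (p b) → m = a ∨ m = b)
    (hz : z ∈ openSegment ℝ (p a) (p b)) (hzk : z ∈ edge p k) (ha : p a ∈ edge p k) :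
    p b ∈ edge p k := by
  have hne : ∀ c : ZMod n, c ≠ c + 1 := fun c => by simpa using hp.one_ne_zero
  rcases hp.eq_or_eq_of_vertex_mem_edge ha with rfl | rfl
  · refine (mem_segment_or_mem_segment hz hzk (hp.injective.ne hab)).elim (fun h => ?_) id
    exact (hvert _ h).resolve_left (hne a).symm ▸ right_mem_edge p a
  · rw [edge, segment_symm] at hzk ⊢
    refine (mem_segment_or_mem_segment hz hzk (hp.injective.ne hab)).elim (fun h => ?_) id
    exact (hvert _ h).resolve_left (hne k) ▸ right_mem_segment _ _ _

lemma IsSimple.eq_add_one_or_eq_add_one {a b : ZMod n} (hp : IsSimple p) (hab : a ≠ b)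
    (ha : p a ∈ edge p k) (hb : p b ∈ edge p k) : b = a + 1 ∨ a = b + 1 := by
  rcases hp.eq_or_eq_of_vertex_mem_edge ha with rfl | rfl <;>
    rcases hp.eq_or_eq_of_vertex_mem_edge hb with rfl | rfl <;> simp_all

lemma sub_mem_strictLeft_of_mem_openSegment
    (hturn : 0 < cross (edgeVec p (i - 1)) (edgeVec p i))
    (hz : z ∈ openSegment ℝ (p (i - 1)) (p (i + 1))) :
    z - p i ∈ strictLeft (edgeVec p (i - 1)) (edgeVec p i) := by
  obtain ⟨s, t, hs, ht, hst, rfl⟩ := hz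
  have hsub : s • p (i - 1) + t • p (i + 1) - p i = t • edgeVec p i - s • edgeVec p (i - 1) := by
    rw [edgeVec_sub_one, edgeVec, eq_sub_of_add_eq hst]
    module
  rw [hsub]
  simp only [strictLeft, mem_ofPred_eq, map_sub, map_smul, cross_self, smul_eq_mul,
    cross_swap (edgeVec p i) (edgeVec p (i - 1))]
  exact ⟨by nlinarith, by nlinarith⟩

lemma depth_eq_of_mem_segment (hz : z ∈ segment ℝ (p (i - 1)) (p (i + 1))) :
    depth p i z = cross (edgeVec p (i - 1)) (edgeVec p i) := by
  have hconv : Convex ℝ {w | depth p i w = cross (edgeVec p (i - 1)) (edgeVec p i)} := by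
    simp only [depth, map_sub, sub_eq_iff_eq_add]
    exact convex_hyperplane (LinearMap.isLinear _) _
  exact hconv.segment_subset (depth_prev p i) (depth_next p i) hz

lemma IsSimple.disjoint_openSegment_boundary (hp : IsSimple p) (hn : 4 ≤ n)
    (hturn : 0 < cross (edgeVec p (i - 1)) (edgeVec p i))
    (hear : ∀ j ≠ i, p j - p i ∈ closedSector (edgeVec p (i - 1)) (edgeVec p i) →
      depth p i (p j) ≤ cross (edgeVec p (i - 1)) (edgeVec p i) → j = i - 1 ∨ j = i + 1) :
    Disjoint (openSegment ℝ (p (i - 1)) (p (i + 1))) (boundary p) := by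
  have hne : i - 1 ≠ i + 1 := fun h => hp.two_ne_zero (by linear_combination -h)
  have hvert : ∀ m, p m ∈ segment ℝ (p (i - 1)) (p (i + 1)) → m = i - 1 ∨ m = i + 1 := by
    intro m hm
    have hdepth := depth_eq_of_mem_segment hm
    rw [← insert_endpoints_openSegment, mem_insert_iff, mem_insert_iff, hp.injective.eq_iff,
      hp.injective.eq_iff, ← or_assoc] at hm
    refine hm.elim id fun hm => hear m ?_ ?_ hdepth.le
    · rintro rfl
      rw [depth, sub_self, map_zero] at hdepth
      exact hturn.ne hdepth
    · exact strictLeft_subset_closedSector _ _ (sub_mem_strictLeft_of_mem_openSegment hturn hm)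
  refine Set.disjoint_left.2 fun z hz hzb => ?_
  obtain ⟨k, hzk⟩ := mem_iUnion.1 hzb
  obtain ⟨j, hji, hjk, hjsec, hjdepth⟩ := hp.exists_vertex_depth_le hturn hzk
    (sub_mem_strictLeft_of_mem_openSegment hturn hz)
    (depth_eq_of_mem_segment (openSegment_subset_segment ℝ _ _ hz)).le
  rw [depth_eq_of_mem_segment (openSegment_subset_segment ℝ _ _ hz)] at hjdepth
  have hboth : p (i - 1) ∈ edge p k ∧ p (i + 1) ∈ edge p k := by
    rcases hear j hji hjsec hjdepth with rfl | rfl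
    · exact ⟨hjk, hp.right_mem_edge_of_left_mem_edge hne hvert hz hzk hjk⟩
    · refine ⟨hp.right_mem_edge_of_left_mem_edge hne.symm (fun m hm => ?_)
        (by rwa [openSegment_symm]) hzk hjk, hjk⟩
      exact (hvert m (by rwa [segment_symm])).symm
  rcases hp.eq_add_one_or_eq_add_one hne hboth.1 hboth.2 with h | h
  · exact hp.one_ne_zero (by linear_combination h)
  · exact natCast_ne_zero (n := n) three_ne_zero (by lia) (by push_cast; linear_combination -h)

lemma IsCCW.isDiagonal_of_ear_empty [NeZero n] (hp : IsCCW p) (hn : 4 ≤ n)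
    (hturn : 0 < cross (edgeVec p (i - 1)) (edgeVec p i))
    (hear : ∀ j ≠ i, p j - p i ∈ closedSector (edgeVec p (i - 1)) (edgeVec p i) →
      depth p i (p j) ≤ cross (edgeVec p (i - 1)) (edgeVec p i) → j = i - 1 ∨ j = i + 1) :
    IsDiagonal p (i - 1) (i + 1) := by
  have hdisj := hp.disjoint_openSegment_boundary hn hturn hear
  set m := midpoint ℝ (p (i - 1)) (p (i + 1))
  have hm : m ∈ openSegment ℝ (p (i - 1)) (p (i + 1)) := midpoint_mem_openSegment _ _
  have hstrict := sub_mem_strictLeft_of_mem_openSegment hturn hm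
  refine subset_inside_of_isPreconnected (convex_openSegment _ _).isPreconnected hdisj hm ?_
  refine hp.mem_inside_of_sees (disjoint_left.1 hdisj hm) (.vertex i) (fun x hx hxb => ?_)
    (strictLeft_subset_closedSector _ _ hstrict)
  rw [segment_symm, segment_eq_image'] at hx
  obtain ⟨t, ht, rfl⟩ := hx
  simp only at hxb ⊢
  rcases ht.1.eq_or_lt with rfl | ht0
  · rw [zero_smul, add_zero]
  rcases ht.2.eq_or_lt with rfl | ht1
  · rw [one_smul, add_sub_cancel] at hxb
    exact absurd hxb (disjoint_left.1 hdisj hm)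
  obtain ⟨k, hk⟩ := mem_iUnion.1 hxb
  have hlt : depth p i (p i + t • (m - p i)) < cross (edgeVec p (i - 1)) (edgeVec p i) := by
    rw [depth, add_sub_cancel_left, map_smul, ← depth,
      depth_eq_of_mem_segment (openSegment_subset_segment ℝ _ _ hm)]
    exact mul_lt_of_lt_one_left hturn ht1
  obtain ⟨j, hji, -, hjsec, hjdepth⟩ := hp.exists_vertex_depth_le hturn hk
    (by rw [add_sub_cancel_left]; exact smul_mem_strictLeft ht0 hstrict) hlt.le
  have hjlt := hjdepth.trans_lt hlt
  rcases hear j hji hjsec hjlt.le with rfl | rfl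
  exacts [absurd (depth_prev p i) hjlt.ne, absurd (depth_next p i) hjlt.ne]

theorem IsCCW.exists_isDiagonal [NeZero n] (hp : IsCCW p) (hn : 4 ≤ n) :
    ∃ i j, IsDiagonal p i j := by
  obtain ⟨i, hturn⟩ := hp.exists_cross_pos
  by_cases h : ∃ j, (j ≠ i ∧ j ≠ i - 1 ∧ j ≠ i + 1) ∧
      p j - p i ∈ closedSector (edgeVec p (i - 1)) (edgeVec p i) ∧
      depth p i (p j) ≤ cross (edgeVec p (i - 1)) (edgeVec p i)
  · exact ⟨i, hp.exists_isDiagonal_of_vertex_mem hturn h⟩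
  · refine ⟨i - 1, i + 1, hp.isDiagonal_of_ear_empty hn hturn fun j hji hjsec hjdepth => ?_⟩
    by_contra! hj
    exact h ⟨j, ⟨hji, hj⟩, hjsec, hjdepth⟩

end Diagonal

/-! ### Cutting along a diagonal -/

section SubPolygon

variable {n : ℕ} {p : ZMod n → ℂ} {i : ZMod n} {k l m : ℕ} {x : ℂ}

lemma natCast_inj (hl : l < n) (hm : m < n) : (l : ZMod n) = m ↔ l = m := by
  rw [ZMod.natCast_eq_natCast_iff', Nat.mod_eq_of_lt hl, Nat.mod_eq_of_lt hm]

lemma exists_natCast_eq (a : ZMod (k + 1)) : ∃ m ≤ k, (m : ZMod (k + 1)) = a :=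
  ⟨a.val, Nat.lt_succ_iff.1 a.val_lt, a.natCast_zmod_val⟩

lemma natCast_self_add_one (k : ℕ) : (k : ZMod (k + 1)) + 1 = 0 := by
  exact_mod_cast ZMod.natCast_self (k + 1)

lemma add_natCast_add_natCast_sub (i : ZMod n) (hk : k ≤ n) : i + k + (n - k : ℕ) = i := by
  rw [add_assoc, ← Nat.cast_add, Nat.add_sub_cancel' hk, ZMod.natCast_self, add_zero]

/-- The index in an `n`-gon of the `a`-th of the `k + 1` consecutive vertices starting at `i`. -/
def arc (i : ZMod n) (k : ℕ) (a : ZMod (k + 1)) : ZMod n := i + a.val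

/-- The polygon formed by the `k + 1` consecutive vertices of `p` starting at `i`. Its last edge,
with index `k`, is the chord from `p (i + k)` back to `p i`. -/
def subPolygon (p : ZMod n → ℂ) (i : ZMod n) (k : ℕ) : ZMod (k + 1) → ℂ := p ∘ arc i k

lemma arc_natCast (i : ZMod n) (hm : m ≤ k) : arc i k m = i + m := by
  rw [arc, ZMod.val_natCast_of_lt (Nat.lt_succ_of_le hm)]

lemma arc_natCast_add_one (i : ZMod n) (hm : m < k) : arc i k (m + 1) = i + m + 1 := by
  rw [add_assoc]
  exact_mod_cast arc_natCast i (Nat.succ_le_of_lt hm)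

lemma arc_zero (i : ZMod n) (k : ℕ) : arc i k 0 = i := by
  rw [arc, ZMod.val_zero, Nat.cast_zero, add_zero]

lemma arc_injective (i : ZMod n) (hk : k < n) : Function.Injective (arc i k) := fun a b h =>
  ZMod.val_injective _ <| (natCast_inj (a.val_lt.trans_le hk) (b.val_lt.trans_le hk)).1
    (add_left_cancel h)

lemma subPolygon_natCast (p : ZMod n → ℂ) (i : ZMod n) (hm : m ≤ k) :
    subPolygon p i k m = p (i + m) :=
  congrArg p (arc_natCast i hm)

lemma subPolygon_natCast_add_one (p : ZMod n → ℂ) (i : ZMod n) (hm : m < k) :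
    subPolygon p i k (m + 1) = p (i + m + 1) :=
  congrArg p (arc_natCast_add_one i hm)

lemma subPolygon_last_add_one (p : ZMod n → ℂ) (i : ZMod n) (k : ℕ) :
    subPolygon p i k (k + 1) = p i := by
  rw [natCast_self_add_one]
  exact congrArg p (arc_zero i k)

lemma edge_subPolygon (p : ZMod n → ℂ) (i : ZMod n) (hm : m < k) :
    edge (subPolygon p i k) m = edge p (i + m) := by
  rw [edge, edge, subPolygon_natCast p i hm.le, subPolygon_natCast_add_one p i hm]

lemma edge_subPolygon_last (p : ZMod n → ℂ) (i : ZMod n) (k : ℕ) :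
    edge (subPolygon p i k) k = segment ℝ (p (i + k)) (p i) := by
  rw [edge, subPolygon_natCast p i le_rfl, subPolygon_last_add_one]

lemma mem_boundary_subPolygon : x ∈ boundary (subPolygon p i k) ↔
    (∃ m < k, x ∈ edge p (i + m)) ∨ x ∈ segment ℝ (p (i + k)) (p i) := by
  rw [boundary, mem_iUnion]
  constructor
  · rintro ⟨a, ha⟩
    obtain ⟨m, hm, rfl⟩ := exists_natCast_eq a
    rcases hm.lt_or_eq with hm | rfl
    · exact .inl ⟨m, hm, edge_subPolygon p i hm ▸ ha⟩
    · exact .inr (edge_subPolygon_last p i m ▸ ha)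
  · rintro (⟨m, hm, hx⟩ | hx)
    · exact ⟨m, edge_subPolygon p i hm ▸ hx⟩
    · exact ⟨k, edge_subPolygon_last p i k ▸ hx⟩

lemma segment_subset_boundary_subPolygon (p : ZMod n → ℂ) (i : ZMod n) (k : ℕ) :
    segment ℝ (p (i + k)) (p i) ⊆ boundary (subPolygon p i k) :=
  fun _ hx => mem_boundary_subPolygon.2 (.inr hx)

lemma IsSimple.eq_endpoint_of_mem_edge (hp : IsSimple p) (hk : k < n)
    (hdisj : Disjoint (openSegment ℝ (p (i + k)) (p i)) (boundary p)) (hm : m < k)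
    (hx : x ∈ segment ℝ (p (i + k)) (p i)) (hxm : x ∈ edge p (i + m)) :
    (k = m + 1 ∧ x = p (i + k)) ∨ (m = 0 ∧ x = p i) := by
  rw [← insert_endpoints_openSegment] at hx
  rcases hx with rfl | rfl | hx
  · have h := hp.eq_or_eq_of_vertex_mem_edge hxm
    rw [add_assoc, add_left_cancel_iff, add_left_cancel_iff, ← Nat.cast_succ,
      natCast_inj hk (by lia), natCast_inj hk (by lia)] at h
    exact .inl ⟨h.resolve_left hm.ne', rfl⟩
  · have h := hp.eq_or_eq_of_vertex_mem_edge hxm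
    rw [add_assoc, left_eq_add, left_eq_add, ← Nat.cast_succ] at h
    refine .inr ⟨by_contra fun hm0 => ?_, rfl⟩
    exact h.elim (natCast_ne_zero hm0 (by lia)) (natCast_ne_zero m.succ_ne_zero (by lia))
  · exact absurd (edge_subset_boundary _ _ hxm) (disjoint_left.1 hdisj hx)

lemma IsSimple.subPolygon (hp : IsSimple p) (hk : 2 ≤ k) (hkn : k < n)
    (hdisj : Disjoint (openSegment ℝ (p (i + k)) (p i)) (boundary p)) :
    IsSimple (subPolygon p i k) := by
  refine ⟨Nat.succ_le_succ hk, hp.injective.comp (arc_injective i hkn), fun {a b x} hab ha hb => ?_⟩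
  obtain ⟨l, hl, rfl⟩ := exists_natCast_eq a
  obtain ⟨m, hm, rfl⟩ := exists_natCast_eq b
  wlog hlm : l < m generalizing l m
  · exact (this m hm hb l hl ha hab.symm
      ((not_lt.1 hlm).lt_of_ne fun h => hab (by rw [h]))).symm
  rw [edge_subPolygon p i (hlm.trans_le hm)] at ha
  rcases hm.lt_or_eq with hm | rfl
  · rw [edge_subPolygon p i hm] at hb
    have hne : i + (l : ZMod n) ≠ i + m := by
      rw [Ne, add_left_cancel_iff, natCast_inj (by lia) (by lia)]; exact hlm.ne
    have h := hp.eq_of_mem_edge hne ha hb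
    rw [add_assoc, add_assoc, add_left_cancel_iff, add_left_cancel_iff, ← Nat.cast_succ,
      ← Nat.cast_succ, natCast_inj (by lia) (by lia), natCast_inj (by lia) (by lia)] at h
    obtain ⟨rfl, rfl⟩ := h.resolve_right fun h => by lia
    exact .inl ⟨Nat.cast_succ l, (subPolygon_natCast p i hm.le).symm⟩
  · rw [edge_subPolygon_last] at hb
    rcases hp.eq_endpoint_of_mem_edge hkn hdisj hlm hb ha with ⟨rfl, rfl⟩ | ⟨rfl, rfl⟩
    · exact .inl ⟨Nat.cast_succ l, (subPolygon_natCast p i le_rfl).symm⟩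
    · refine .inr ⟨by rw [natCast_self_add_one, Nat.cast_zero], ?_⟩
      rw [subPolygon_natCast p i hlm.le, Nat.cast_zero, add_zero]

lemma isCorner_subPolygon (hx : x ∈ openSegment ℝ (p (i + k)) (p i)) :
    IsCorner (subPolygon p i k) x (p i - p (i + k)) (p i - p (i + k)) := by
  have hlast := subPolygon_natCast p i (le_refl k)
  have hzero := subPolygon_last_add_one p i k
  rw [← hlast, ← hzero] at hx ⊢
  exact .inner hx

lemma sum_eq_sum_range {M : Type*} [AddCommMonoid M] [NeZero n] (f : ZMod n → M) :
    ∑ a, f a = ∑ m ∈ Finset.range n, f m := by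
  cases n with
  | zero => exact absurd rfl (NeZero.ne 0)
  | succ n =>
    rw [← Fin.sum_univ_eq_sum_range fun m => f (m : ZMod (n + 1))]
    exact Finset.sum_congr rfl fun a _ => congrArg f (ZMod.natCast_zmod_val (n := n + 1) a).symm

lemma totalAngle_eq_sum_range [NeZero n] (p : ZMod n → ℂ) (i : ZMod n) (x : ℂ) :
    totalAngle p x = ∑ m ∈ Finset.range n, angle (p (i + m)) (p (i + m + 1)) x := by
  rw [totalAngle, ← Equiv.sum_comp (Equiv.addLeft i), sum_eq_sum_range]
  rfl

lemma totalAngle_subPolygon (p : ZMod n → ℂ) (i : ZMod n) (k : ℕ) (x : ℂ) :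
    totalAngle (subPolygon p i k) x =
      ∑ m ∈ Finset.range k, angle (p (i + m)) (p (i + m + 1)) x + angle (p (i + k)) (p i) x := by
  rw [totalAngle, sum_eq_sum_range, Finset.sum_range_succ, subPolygon_natCast p i le_rfl,
    subPolygon_last_add_one]
  congr 1
  refine Finset.sum_congr rfl fun m hm => ?_
  rw [Finset.mem_range] at hm
  rw [subPolygon_natCast p i hm.le, subPolygon_natCast_add_one p i hm]

/-- The chord is traversed once in each direction, so its two contributions cancel. -/
lemma totalAngle_eq_add [NeZero n] (hk : k ≤ n) (hx : x ∉ segment ℝ (p (i + k)) (p i)) :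
    totalAngle p x = totalAngle (subPolygon p i k) x +
      totalAngle (subPolygon p (i + k) (n - k)) x := by
  have hsum := Finset.sum_range_add (fun m : ℕ => angle (p (i + m)) (p (i + m + 1)) x) k (n - k)
  rw [Nat.add_sub_cancel' hk] at hsum
  rw [totalAngle_eq_sum_range p i, totalAngle_subPolygon, totalAngle_subPolygon,
    add_natCast_add_natCast_sub i hk, angle_swap hx, hsum]
  simp only [Nat.cast_add, add_assoc]
  ring

end SubPolygon

section Split

variable {n : ℕ} [NeZero n] {p : ZMod n → ℂ} {i j : ZMod n} {k : ℕ} {x : ℂ}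

lemma IsSimple.isCCW_of_totalAngle_pos (hp : IsSimple p) (hx : x ∈ leftSide p)
    (h : 0 < totalAngle p x) : IsCCW p := by
  refine hp.isCCW_or_isCCW_reverse.resolve_right fun hrev => h.ne' ?_
  have hzero := hrev.totalAngle_eq_zero (by rwa [reverse_reverse])
  rwa [totalAngle_reverse hx.1, neg_eq_zero] at hzero

lemma IsSimple.totalAngle_nonpos (hp : IsSimple p) (hx : x ∈ leftSide (PlanePolygon.reverse p)) :
    totalAngle p x ≤ 0 := by
  rcases hp.isCCW_or_isCCW_reverse with h | h
  · exact (h.totalAngle_eq_zero hx).le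
  · have := h.totalAngle_eq_two_pi hx
    rw [totalAngle_reverse (boundary_reverse p ▸ hx.1)] at this
    linarith [Real.two_pi_pos]

lemma IsCCW.totalAngle_eq_two_pi_of_mem_inside (hp : IsCCW p) (hx : x ∈ inside p) :
    totalAngle p x = 2 * Real.pi :=
  hp.totalAngle_eq_two_pi (hp.inside_eq_leftSide ▸ hx)

lemma IsDiagonal.symm (h : IsDiagonal p i j) : IsDiagonal p j i := by
  rwa [IsDiagonal, openSegment_symm]

lemma IsDiagonal.ne (h : IsDiagonal p i j) : i ≠ j := by
  rintro rfl
  rw [IsDiagonal, openSegment_same, singleton_subset_iff] at h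
  exact h.1 (vertex_mem_boundary p i)

lemma IsDiagonal.ne_add_one (h : IsDiagonal p i j) : j ≠ i + 1 := by
  rintro rfl
  have hmid := midpoint_mem_openSegment (𝕜 := ℝ) (p i) (p (i + 1))
  exact (h hmid).1 (edge_subset_boundary p i (openSegment_subset_segment _ _ _ hmid))

/-- A counterclockwise polygon with a diagonal from `p (i + k)` to `p i`. It is cut into
`subPolygon p i k` and `subPolygon p (i + k) (n - k)`, whose roles are exchanged by
`IsSplit.symm`. -/
structure IsSplit (p : ZMod n → ℂ) (i : ZMod n) (k : ℕ) : Prop where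
  isCCW : IsCCW p
  two_le : 2 ≤ k
  add_two_le : k + 2 ≤ n
  isDiagonal : IsDiagonal p (i + k) i

lemma IsCCW.isSplit (hp : IsCCW p) (h : IsDiagonal p i j) : IsSplit p i (j - i).val := by
  have hj : i + ((j - i).val : ZMod n) = j := by rw [ZMod.natCast_zmod_val, add_sub_cancel]
  have hlt := (j - i).val_lt
  rw [← hj] at h
  generalize (j - i).val = k at h hlt
  refine ⟨hp, ?_, ?_, h.symm⟩
  · by_contra! hk
    interval_cases k
    · exact h.ne (by simp)
    · exact h.ne_add_one (by simp)
  · by_contra! hk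
    obtain rfl : n = k + 1 := by lia
    exact h.symm.ne_add_one (by rw [add_assoc, natCast_self_add_one, add_zero])

namespace IsSplit

lemma symm (h : IsSplit p i k) : IsSplit p (i + k) (n - k) := by
  have := h.two_le
  have := h.add_two_le
  refine ⟨h.isCCW, by lia, by lia, ?_⟩
  rw [add_natCast_add_natCast_sub i (by lia)]
  exact h.isDiagonal.symm

lemma lt (h : IsSplit p i k) : k < n := by
  linarith [h.add_two_le]

lemma isSimple_subPolygon (h : IsSplit p i k) : IsSimple (subPolygon p i k) :=
  h.isCCW.subPolygon h.two_le h.lt (disjoint_left.2 fun _ hx => (h.isDiagonal hx).1)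

/-- On the left of the diagonal, the second polygon contributes a nonpositive angle to the total of
`2π`, so the first one must wind around. -/
lemma isCCW_subPolygon (h : IsSplit p i k) : IsCCW (subPolygon p i k) := by
  set d := p i - p (i + k)
  have hd : 0 < cross d (Complex.I * d) :=
    cross_I_mul_self_pos (sub_ne_zero.2 (h.isCCW.injective.ne h.isDiagonal.ne.symm))
  have hmid := midpoint_mem_openSegment (𝕜 := ℝ) (p (i + k)) (p i)
  have hback : IsCorner (reverse (subPolygon p (i + k) (n - k)))
      (midpoint ℝ (p (i + k)) (p i)) d d := by
    have hmid' : midpoint ℝ (p (i + k)) (p i) ∈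
        openSegment ℝ (p (i + k + (n - k : ℕ))) (p (i + k)) := by
      rwa [add_natCast_add_natCast_sub i h.lt.le, openSegment_symm]
    convert (isCorner_subPolygon hmid').reverse using 1 <;>
      rw [neg_sub, add_natCast_add_natCast_sub i h.lt.le]
  obtain ⟨e, hfst, hsnd, hin⟩ :=
    (((isCorner_subPolygon hmid).eventually_mem_leftSide h.isSimple_subPolygon ⟨hd, hd⟩).and
    ((hback.eventually_mem_leftSide h.symm.isSimple_subPolygon.reverse ⟨hd, hd⟩).and
    ((tendsto_add_smul _ _).eventually_mem
      ((isOpen_inside p).mem_nhds (h.isDiagonal hmid))))).exists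
  refine h.isSimple_subPolygon.isCCW_of_totalAngle_pos hfst ?_
  have hadd := totalAngle_eq_add h.lt.le fun hx =>
    hfst.1 (segment_subset_boundary_subPolygon p i k hx)
  linarith [h.symm.isSimple_subPolygon.totalAngle_nonpos hsnd, Real.two_pi_pos,
    h.isCCW.totalAngle_eq_two_pi_of_mem_inside hin]

lemma exists_eq_add_natCast (h : IsSplit p i k) (j : ZMod n) :
    (∃ m < k, j = i + (m : ℕ)) ∨ ∃ m < n - k, j = i + k + (m : ℕ) := by
  have hj : j = i + ((j - i).val : ZMod n) := by rw [ZMod.natCast_zmod_val, add_sub_cancel]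
  have hlt := (j - i).val_lt
  have := h.lt
  rcases lt_or_ge (j - i).val k with hk | hk
  · exact .inl ⟨_, hk, hj⟩
  · refine .inr ⟨(j - i).val - k, by lia, ?_⟩
    rw [add_assoc, ← Nat.cast_add, Nat.add_sub_cancel' hk]
    exact hj

lemma boundary_subset (h : IsSplit p i k) :
    boundary p ⊆ boundary (subPolygon p i k) ∪ boundary (subPolygon p (i + k) (n - k)) := by
  refine iUnion_subset fun j x hx => ?_
  rcases h.exists_eq_add_natCast j with ⟨m, hm, rfl⟩ | ⟨m, hm, rfl⟩
  · exact .inl (mem_boundary_subPolygon.2 (.inl ⟨m, hm, hx⟩))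
  · exact .inr (mem_boundary_subPolygon.2 (.inl ⟨m, hm, hx⟩))

lemma disjoint_inside (h : IsSplit p i k) :
    Disjoint (inside (subPolygon p i k)) (inside (subPolygon p (i + k) (n - k))) := by
  refine disjoint_left.2 fun x hfst hsnd => ?_
  have hadd := totalAngle_eq_add h.lt.le fun hx =>
    hfst.1 (segment_subset_boundary_subPolygon p i k hx)
  rw [h.isCCW_subPolygon.totalAngle_eq_two_pi_of_mem_inside hfst,
    h.symm.isCCW_subPolygon.totalAngle_eq_two_pi_of_mem_inside hsnd] at hadd
  have hin : x ∈ inside p :=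
    ⟨fun hx => (h.boundary_subset hx).elim hfst.1 hsnd.1, by linarith [Real.two_pi_pos]⟩
  linarith [h.isCCW.totalAngle_eq_two_pi_of_mem_inside hin, Real.two_pi_pos]

lemma inside_subPolygon_subset (h : IsSplit p i k) : inside (subPolygon p i k) ⊆ inside p := by
  intro x hx
  have hxb : x ∉ boundary (subPolygon p (i + k) (n - k)) := fun hb => by
    have hcl := h.symm.isCCW_subPolygon.boundary_subset_closure_inside hb
    obtain ⟨y, hy⟩ := mem_closure_iff.1 hcl _ (isOpen_inside _) hx
    exact disjoint_left.1 h.disjoint_inside hy.1 hy.2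
  refine ⟨fun hb => (h.boundary_subset hb).elim hx.1 hxb, ?_⟩
  rw [totalAngle_eq_add h.lt.le fun hs => hx.1 (segment_subset_boundary_subPolygon p i k hs)]
  have hsnd : totalAngle (subPolygon p (i + k) (n - k)) x = 0 := by_contra fun hne =>
    disjoint_left.1 h.disjoint_inside hx ⟨hxb, hne⟩
  rw [hsnd, add_zero]
  exact hx.2

lemma mem_inside_cases (h : IsSplit p i k) (hx : x ∈ inside p) :
    x ∈ inside (subPolygon p i k) ∨ x ∈ inside (subPolygon p (i + k) (n - k)) ∨
      x ∈ openSegment ℝ (p (i + k)) (p i) := by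
  by_cases hseg : x ∈ segment ℝ (p (i + k)) (p i)
  · rw [← insert_endpoints_openSegment] at hseg
    rcases hseg with rfl | rfl | hseg
    exacts [absurd (vertex_mem_boundary p _) hx.1, absurd (vertex_mem_boundary p _) hx.1,
      .inr (.inr hseg)]
  have hadd := totalAngle_eq_add h.lt.le hseg
  have hfst : x ∉ boundary (subPolygon p i k) := fun hb =>
    (mem_boundary_subPolygon.1 hb).elim
      (fun ⟨_, _, hm⟩ => hx.1 (edge_subset_boundary _ _ hm)) hseg
  have hsnd : x ∉ boundary (subPolygon p (i + k) (n - k)) := fun hb =>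
    (mem_boundary_subPolygon.1 hb).elim
      (fun ⟨_, _, hm⟩ => hx.1 (edge_subset_boundary _ _ hm)) fun hs => hseg <| by
        rwa [add_natCast_add_natCast_sub i h.lt.le, segment_symm] at hs
  by_cases hzero : totalAngle (subPolygon p i k) x = 0
  · exact .inr (.inl ⟨hsnd, fun hzero' => hx.2 (by rw [hadd, hzero, hzero', add_zero])⟩)
  · exact .inl ⟨hfst, hzero⟩

end IsSplit

end Split

/-! ### Triangles -/

section Triangle

variable {p : ZMod 3 → ℂ} {x : ℂ}

lemma IsCCW.cross_pos_of_triangle (hp : IsCCW p) (i : ZMod 3) :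
    0 < cross (edgeVec p (i - 1)) (edgeVec p i) := by
  have hturn : Function.Periodic (fun i => cross (edgeVec p (i - 1)) (edgeVec p i)) 1 := fun i => by
    have hsum : edgeVec p (i + 1) = -edgeVec p (i - 1) - edgeVec p i := by
      have hi : i + 1 + 1 = i - 1 := by revert i; decide
      simp only [edgeVec, hi, sub_add_cancel]
      abel
    simp only [add_sub_cancel_right]
    rw [hsum, map_sub, map_neg, cross_self, sub_zero, ← cross_swap]
  obtain ⟨j, hj⟩ := hp.exists_cross_pos
  exact hj.trans_eq ((periodic_one_eq_zero hturn j).trans (periodic_one_eq_zero hturn i).symm)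

lemma IsCCW.cross_pos_of_mem_inside_triangle (hp : IsCCW p) (hx : x ∈ inside p) (i : ZMod 3) :
    0 < cross (edgeVec p i) (x - p i) := by
  have hrange : range p = {p (i - 1), p i, p (i + 1)} := by
    have huniv : (univ : Set (ZMod 3)) = {i - 1, i, i + 1} := by
      ext j; revert i j; decide
    rw [← image_univ, huniv, image_insert_eq, image_pair]
  have hhull := inside_subset_convexHull p hx
  rw [hrange, convexHull_insert (insert_nonempty _ _), convexHull_pair, mem_convexJoin] at hhull
  obtain ⟨_, rfl, y, hy, hxy⟩ := hhull
  rw [segment_symm, segment_eq_image'] at hxy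
  obtain ⟨t, ht, rfl⟩ := hxy
  have hcross : cross (edgeVec p i) (y + t • (p (i - 1) - y) - p i) =
      t * cross (edgeVec p (i - 1)) (edgeVec p i) := by
    have hsplit : y + t • (p (i - 1) - y) - p i =
        (1 - t) • (y - p i) - t • edgeVec p (i - 1) := by rw [edgeVec_sub_one]; module
    rw [hsplit, map_sub, map_smul, map_smul, cross_eq_zero_of_mem_edge hy,
      cross_swap (edgeVec p (i - 1)), smul_zero, smul_eq_mul]
    ring
  have ht0 : t ≠ 0 := by
    rintro rfl
    exact hx.1 (edge_subset_boundary p i (by simpa [edge] using hy))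
  rw [hcross]
  exact mul_pos (ht.1.lt_of_ne' ht0) (hp.cross_pos_of_triangle i)

lemma convex_iInter_halfPlane {n : ℕ} (p : ZMod n → ℂ) :
    Convex ℝ (⋂ i, {x | cross (edgeVec p i) (p i) < cross (edgeVec p i) x}) :=
  convex_iInter fun i => convex_halfSpace_gt (cross (edgeVec p i)).isLinear _

lemma IsCCW.inside_triangle_eq (hp : IsCCW p) :
    inside p = ⋂ i, {x | cross (edgeVec p i) (p i) < cross (edgeVec p i) x} := by
  have hsub : inside p ⊆ ⋂ i, {x | cross (edgeVec p i) (p i) < cross (edgeVec p i) x} :=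
    subset_iInter fun i x hx => by
      rw [mem_ofPred_eq, ← sub_pos, ← map_sub]
      exact hp.cross_pos_of_mem_inside_triangle hx i
  obtain ⟨x, hx⟩ : (inside p).Nonempty :=
    closure_nonempty_iff.1 ⟨_, hp.boundary_subset_closure_inside (vertex_mem_boundary p 0)⟩
  refine hsub.antisymm (subset_inside_of_isPreconnected
    (convex_iInter_halfPlane p).isPreconnected ?_ (hsub hx) hx)
  refine disjoint_left.2 fun y hy hyb => ?_
  obtain ⟨i, hi⟩ := mem_iUnion.1 hyb
  have hzero := cross_eq_zero_of_mem_edge hi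
  rw [map_sub, sub_eq_zero] at hzero
  exact (mem_iInter.1 hy i).ne' hzero

lemma IsCCW.convex_inside_triangle (hp : IsCCW p) : Convex ℝ (inside p) :=
  hp.inside_triangle_eq ▸ convex_iInter_halfPlane p

lemma IsCCW.openSegment_subset_inside_triangle (hp : IsCCW p) (hx : x ∈ inside p) (i : ZMod 3) :
    openSegment ℝ x (p i) ⊆ inside p := by
  have := hp.convex_inside_triangle.openSegment_interior_closure_subset_interior
    ((isOpen_inside p).interior_eq.symm ▸ hx)
    (hp.boundary_subset_closure_inside (vertex_mem_boundary p i))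
  rwa [(isOpen_inside p).interior_eq] at this

end Triangle

/-! ### Links -/

section Links

variable {n : ℕ} [NeZero n]

/-- The graph on the points of a vector space in which two points are adjacent when they are joined
by a segment in `S`. A walk in it is a polygonal path in `S`. -/
def segmentGraph {E : Type*} [AddCommGroup E] [Module ℝ E] (S : Set E) : SimpleGraph E where
  Adj x y := x ≠ y ∧ segment ℝ x y ⊆ S
  symm := ⟨fun x y h => ⟨h.1.symm, segment_symm ℝ x y ▸ h.2⟩⟩
  loopless := ⟨fun _ h => h.1 rfl⟩

lemma segmentGraph_mono {E : Type*} [AddCommGroup E] [Module ℝ E] :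
    Monotone (segmentGraph (E := E)) := fun _ _ h _ _ hadj => ⟨hadj.1, hadj.2.trans h⟩

lemma edist_segmentGraph_le_one {E : Type*} [AddCommGroup E] [Module ℝ E] {S : Set E} {x y : E}
    (h : segment ℝ x y ⊆ S) : (segmentGraph S).edist x y ≤ 1 :=
  SimpleGraph.edist_le_one_iff_adj_or_eq.2 <| or_iff_not_imp_right.2 fun hne => ⟨hne, h⟩

/-- Two vertices that coincide, span an edge, or span a diagonal. Vertices pushed slightly into the
polygon then see each other inside it. -/
inductive Visible (p : ZMod n → ℂ) : ZMod n → ZMod n → Prop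
  | refl (i : ZMod n) : Visible p i i
  | edge (i : ZMod n) : Visible p i (i + 1)
  | edge_symm (i : ZMod n) : Visible p (i + 1) i
  | diagonal {i j} : IsDiagonal p i j → Visible p i j

/-- `Linked p x i k` states that a path of `k` segments leads from `x` to the `i`-th vertex, the
first segment running inside the polygon and the others joining visible vertices. -/
inductive Linked (p : ZMod n → ℂ) (x : ℂ) : ZMod n → ℕ → Prop
  | start {i} : openSegment ℝ x (p i) ⊆ inside p → Linked p x i 1
  | step {i j k} : Linked p x i k → Visible p i j → Linked p x j (k + 1)

variable {p : ZMod n → ℂ} {i j : ZMod n} {k l m : ℕ} {x y : ℂ}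

lemma Visible.symm (h : Visible p i j) : Visible p j i := by
  cases h with
  | refl => exact .refl _
  | edge => exact .edge_symm _
  | edge_symm => exact .edge _
  | diagonal h => exact .diagonal h.symm

lemma Visible.isDiagonal (h : Visible p i j) (hne : j ≠ i) (hnext : j ≠ i + 1)
    (hprev : i ≠ j + 1) : IsDiagonal p i j := by
  cases h with
  | refl => exact absurd rfl hne
  | edge => exact absurd rfl hnext
  | edge_symm => exact absurd rfl hprev
  | diagonal h => exact h

lemma Linked.mono (h : Linked p x i k) (hkl : k ≤ l) : Linked p x i l := by
  induction hkl with
  | refl => exact h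
  | step _ ih => exact ih.step (.refl i)

lemma IsSplit.visible_of_subPolygon (h : IsSplit p i k) {a b : ZMod (k + 1)}
    (hab : Visible (subPolygon p i k) a b) : Visible p (arc i k a) (arc i k b) := by
  have hedge (a : ZMod (k + 1)) : Visible p (arc i k a) (arc i k (a + 1)) := by
    obtain ⟨m, hm, rfl⟩ := exists_natCast_eq a
    rcases hm.lt_or_eq with hm | rfl
    · rw [arc_natCast i hm.le, arc_natCast_add_one i hm]
      exact .edge _
    · rw [arc_natCast i le_rfl, natCast_self_add_one, arc_zero]
      exact .diagonal h.isDiagonal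
  cases hab with
  | refl => exact .refl _
  | edge => exact hedge a
  | edge_symm => exact (hedge b).symm
  | diagonal hd => exact .diagonal (hd.trans h.inside_subPolygon_subset)

lemma IsSplit.linked_of_subPolygon (h : IsSplit p i k) {a : ZMod (k + 1)}
    (ha : Linked (subPolygon p i k) x a m) : Linked p x (arc i k a) m := by
  induction ha with
  | start hx => exact .start (hx.trans h.inside_subPolygon_subset)
  | step _ hv ih => exact ih.step (h.visible_of_subPolygon hv)

lemma openSegment_subset_openSegment_left {E : Type*} [AddCommGroup E] [Module ℝ E] {a b c : E}
    (hc : c ∈ openSegment ℝ a b) : openSegment ℝ a c ⊆ openSegment ℝ a b := by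
  simp only [openSegment_eq_image'] at hc ⊢
  obtain ⟨s, hs, rfl⟩ := hc
  rintro _ ⟨t, ht, rfl⟩
  exact ⟨t * s, ⟨mul_pos ht.1 hs.1, mul_lt_one_of_nonneg_of_lt_one_left ht.1.le ht.2 hs.2.le⟩,
    by simp only [add_sub_cancel_left, mul_smul]⟩

lemma IsCCW.sub_mem_closedSector_of_openSegment (hp : IsCCW p) {z A B : ℂ} (hz : IsCorner p z A B)
    (h : openSegment ℝ z x ⊆ inside p) : x - z ∈ closedSector A B := by
  have hmid := midpoint_mem_openSegment (𝕜 := ℝ) z x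
  have hsees : Sees (boundary p) (midpoint ℝ z x) z := fun y hy hyb => by
    rw [segment_symm, ← insert_endpoints_openSegment] at hy
    rcases hy with rfl | rfl | hy
    · rfl
    · exact absurd hyb (h hmid).1
    · exact absurd hyb (h (openSegment_subset_openSegment_left hmid hy)).1
  have hsub := smul_mem_closedSector zero_le_two (hp.sub_mem_closedSector (h hmid) hz hsees)
  rwa [midpoint_sub_left, smul_smul, mul_invOf_self, one_smul] at hsub

section Realization

variable {u : ZMod n → ℂ}

lemma Visible.eventually_disjoint
    (hu : ∀ i, u i ∈ strictLeft (edgeVec p (i - 1)) (edgeVec p i))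
    (hp : IsCCW p) (h : Visible p i j) :
    ∀ᶠ e : ℝ in 𝓝[>] 0, Disjoint (segment ℝ (p i + e • u i) (p j + e • u j)) (boundary p) := by
  cases h with
  | refl =>
    filter_upwards [hp.eventually_mem_inside (.vertex i) (hu i)] with e he
    rw [segment_same, disjoint_singleton_left]
    exact he.1
  | edge => exact hp.eventually_disjoint_segment_edge hu i
  | edge_symm =>
    exact (hp.eventually_disjoint_segment_edge hu j).mono fun _ he => by rwa [segment_symm]
  | diagonal h =>
    exact ((IsCorner.vertex i).hasCorner hp.toIsSimple).eventually_disjoint_segment_of_openSegment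
      ((IsCorner.vertex j).hasCorner hp.toIsSimple) (isClosed_boundary p)
      (disjoint_left.2 fun _ hx => (h hx).1) (hp.sub_mem_closedSector_of_openSegment (.vertex i) h)
      (hp.sub_mem_closedSector_of_openSegment (.vertex j) h.symm) (hu i) (hu j)

lemma Visible.eventually_segment_subset
    (hu : ∀ i, u i ∈ strictLeft (edgeVec p (i - 1)) (edgeVec p i))
    (hp : IsCCW p) (h : Visible p i j) :
    ∀ᶠ e : ℝ in 𝓝[>] 0, segment ℝ (p i + e • u i) (p j + e • u j) ⊆ inside p := by
  filter_upwards [h.eventually_disjoint hu hp, hp.eventually_mem_inside (.vertex i) (hu i)]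
    with e hdisj hin
  exact subset_inside_of_isPreconnected (convex_segment _ _).isPreconnected hdisj
    (left_mem_segment ℝ _ _) hin

lemma IsCCW.eventually_segment_subset
    (hu : ∀ i, u i ∈ strictLeft (edgeVec p (i - 1)) (edgeVec p i))
    (hp : IsCCW p) (hx : x ∈ inside p)
    (h : openSegment ℝ x (p i) ⊆ inside p) :
    ∀ᶠ e : ℝ in 𝓝[>] 0, segment ℝ x (p i + e • u i) ⊆ inside p := by
  rw [openSegment_symm] at h
  have hsees : Sees (boundary p) x (p i) := fun y hy hyb => by
    rw [segment_symm, ← insert_endpoints_openSegment] at hy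
    rcases hy with rfl | rfl | hy
    exacts [rfl, absurd hyb hx.1, absurd hyb (h hy).1]
  filter_upwards [((IsCorner.vertex i).hasCorner hp.toIsSimple).eventually_disjoint_segment_of_sees
    (isClosed_boundary p) (vertex_mem_boundary p i) hx.1 hsees
    (hp.sub_mem_closedSector_of_openSegment (.vertex i) h) (hu i)] with e he
  exact subset_inside_of_isPreconnected (convex_segment _ _).isPreconnected he
    (left_mem_segment ℝ _ _) hx

lemma Linked.eventually_edist_le
    (hu : ∀ i, u i ∈ strictLeft (edgeVec p (i - 1)) (edgeVec p i))
    (hp : IsCCW p) (hx : x ∈ inside p) (h : Linked p x i k) :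
    ∀ᶠ e : ℝ in 𝓝[>] 0, (segmentGraph (inside p)).edist x (p i + e • u i) ≤ k := by
  induction h with
  | start h =>
    filter_upwards [hp.eventually_segment_subset hu hx h] with e he
    exact edist_segmentGraph_le_one he
  | step _ hv ih =>
    filter_upwards [ih, hv.eventually_segment_subset hu hp] with e he hseg
    exact SimpleGraph.edist_triangle.trans
      (add_le_add he (edist_segmentGraph_le_one hseg))

end Realization

lemma Linked.edist_le (hp : IsCCW p) (hx : x ∈ inside p) (hy : y ∈ inside p)
    (hxi : Linked p x i k) (hyi : Linked p y i l) :
    (segmentGraph (inside p)).edist x y ≤ (k + l : ℕ) := by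
  choose u hu using fun i => (IsCorner.vertex (p := p) i).strictLeft_nonempty hp.toIsSimple
  obtain ⟨e, hxe, hye⟩ :=
    ((hxi.eventually_edist_le hu hp hx).and (hyi.eventually_edist_le hu hp hy)).exists
  rw [SimpleGraph.edist_comm] at hye
  exact SimpleGraph.edist_triangle.trans (add_le_add hxe hye)

end Links

/-! ### Counting links -/

section Counting

theorem IsCCW.split_induction {n : ℕ} [inst : NeZero n] {p : ZMod n → ℂ}
    {motive : ∀ (n : ℕ) [NeZero n], (ZMod n → ℂ) → Prop}
    (triangle : ∀ p : ZMod 3 → ℂ, IsCCW p → motive 3 p)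
    (split : ∀ (n : ℕ) [NeZero n] (p : ZMod n → ℂ), 4 ≤ n → IsCCW p →
      (∀ i k, IsSplit p i k → motive (k + 1) (subPolygon p i k)) → motive n p)
    (hp : IsCCW p) : motive n p := by
  induction n using Nat.strong_induction_on generalizing inst with
  | _ n ih =>
    rcases hp.three_le.eq_or_lt with rfl | hn
    · exact triangle p hp
    · exact split n p hn hp fun i k h =>
        ih (k + 1) (by linarith [h.add_two_le]) h.isCCW_subPolygon

variable {n : ℕ} [NeZero n] {p : ZMod n → ℂ} {i j w : ZMod n} {k l m : ℕ} {x y : ℂ}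

lemma IsCCW.exists_isSplit (hp : IsCCW p) (hn : 4 ≤ n) (j : ZMod n) :
    ∃ i k, IsSplit p i k ∧ ∃ m < k, j = i + (m : ℕ) := by
  obtain ⟨a, b, hab⟩ := hp.exists_isDiagonal hn
  have h := hp.isSplit hab
  rcases h.exists_eq_add_natCast j with hj | hj
  exacts [⟨_, _, h, hj⟩, ⟨_, _, h.symm, hj⟩]

/-- The apex is the third vertex of the triangle at the edge in a triangulation. -/
lemma IsCCW.exists_apex (hp : IsCCW p) (i : ZMod n) :
    ∃ j, j ≠ i ∧ j ≠ i + 1 ∧ Visible p i j ∧ Visible p (i + 1) j := by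
  revert i
  refine hp.split_induction (motive := fun n _ p => ∀ i : ZMod n,
    ∃ j, j ≠ i ∧ j ≠ i + 1 ∧ Visible p i j ∧ Visible p (i + 1) j) ?_ ?_
  · intro p _ i
    have hi : i = i + 1 + 1 + 1 := by revert i; decide
    refine ⟨i + 1 + 1, ?_, by simp, ?_, .edge _⟩
    · revert i; decide
    · nth_rw 1 [hi]
      exact .edge_symm _
  · intro n _ p hn hp ih i
    obtain ⟨s, k, h, m, hm, rfl⟩ := hp.exists_isSplit hn i
    obtain ⟨j, hne, hne', hv, hv'⟩ := ih s k h m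
    refine ⟨arc s k j, ?_, ?_, ?_, ?_⟩
    · exact arc_natCast s hm.le ▸ (arc_injective s h.lt).ne hne
    · exact arc_natCast_add_one s hm ▸ (arc_injective s h.lt).ne hne'
    · exact arc_natCast s hm.le ▸ h.visible_of_subPolygon hv
    · exact arc_natCast_add_one s hm ▸ h.visible_of_subPolygon hv'

/-- Bounds for the numbers of links from `x` to the two ends of an edge or diagonal. If it cuts off
a polygon containing `x` with `m` further edges, both ends are reached in `⌈m / 2⌉` links, one of
them even in `⌊m / 2⌋`. -/
structure LinkedToPair (p : ZMod n → ℂ) (x : ℂ) (i j : ZMod n) (m : ℕ) : Prop where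
  left : Linked p x i ((m + 1) / 2)
  right : Linked p x j ((m + 1) / 2)
  left_or_right : Linked p x i (m / 2) ∨ Linked p x j (m / 2)

namespace LinkedToPair

lemma mono (h : LinkedToPair p x i j m) (hml : m ≤ l) : LinkedToPair p x i j l :=
  ⟨h.left.mono (by lia), h.right.mono (by lia),
    h.left_or_right.imp (·.mono (by lia)) (·.mono (by lia))⟩

lemma symm (h : LinkedToPair p x i j m) : LinkedToPair p x j i m :=
  ⟨h.right, h.left, h.left_or_right.symm⟩

lemma of_openSegment (hi : openSegment ℝ x (p i) ⊆ inside p)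
    (hj : openSegment ℝ x (p j) ⊆ inside p) : LinkedToPair p x i j 2 :=
  ⟨.start hi, .start hj, .inl (.start hi)⟩

lemma step (h : LinkedToPair p x i w m) (hi : Visible p i j) (hw : Visible p w j) :
    LinkedToPair p x i j (m + 1) := by
  refine ⟨h.left.mono (by lia), ?_, .inl h.left⟩
  rw [show (m + 1 + 1) / 2 = m / 2 + 1 by lia]
  exact h.left_or_right.elim (·.step hi) (·.step hw)

lemma edist_le_add (hp : IsCCW p) (hx : x ∈ inside p) (hy : y ∈ inside p)
    (hxij : LinkedToPair p x i j k) (hyij : LinkedToPair p y i j l) :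
    (segmentGraph (inside p)).edist x y ≤ (k / 2 + (l + 1) / 2 : ℕ) :=
  hxij.left_or_right.elim (·.edist_le hp hx hy hyij.left) (·.edist_le hp hx hy hyij.right)

lemma edist_le (hp : IsCCW p) (hx : x ∈ inside p) (hy : y ∈ inside p)
    (hxij : LinkedToPair p x i j k) (hyij : LinkedToPair p y i j l) :
    (segmentGraph (inside p)).edist x y ≤ ((k + l) / 2 : ℕ) := by
  rcases le_or_gt (k / 2 + (l + 1) / 2) ((k + l) / 2) with h | h
  · exact (hxij.edist_le_add hp hx hy hyij).trans (Nat.cast_le.2 h)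
  · rw [SimpleGraph.edist_comm]
    exact (hyij.edist_le_add hp hy hx hxij).trans (Nat.cast_le.2 (by lia))

end LinkedToPair

namespace IsSplit

lemma linkedToPair_of_subPolygon (h : IsSplit p i k) {a b : ZMod (k + 1)}
    (hx : LinkedToPair (subPolygon p i k) x a b m) :
    LinkedToPair p x (arc i k a) (arc i k b) m :=
  ⟨h.linked_of_subPolygon hx.left, h.linked_of_subPolygon hx.right,
    hx.left_or_right.imp h.linked_of_subPolygon h.linked_of_subPolygon⟩

lemma linkedToPair_of_mem_diagonal (h : IsSplit p i k) (hx : x ∈ openSegment ℝ (p (i + k)) (p i)) :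
    LinkedToPair p x (i + k) i 2 := by
  refine .of_openSegment ?_ ?_
  · rw [openSegment_symm]
    exact (openSegment_subset_openSegment_left hx).trans h.isDiagonal
  · rw [openSegment_symm] at hx ⊢
    exact (openSegment_subset_openSegment_left hx).trans h.isDiagonal.symm

lemma linkedToPair_fst (h : IsSplit p i k)
    (hx : LinkedToPair (subPolygon p i k) x k (k + 1) k ∨ x ∈ openSegment ℝ (p (i + k)) (p i)) :
    LinkedToPair p x (i + k) i k := by
  rcases hx with hx | hx
  · have := h.linkedToPair_of_subPolygon hx
    rwa [arc_natCast i le_rfl, natCast_self_add_one, arc_zero] at this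
  · exact (h.linkedToPair_of_mem_diagonal hx).mono h.two_le

lemma linkedToPair_snd (h : IsSplit p i k)
    (hx : LinkedToPair (subPolygon p (i + k) (n - k)) x (n - k : ℕ) ((n - k : ℕ) + 1) (n - k) ∨
      x ∈ openSegment ℝ (p (i + k)) (p i)) :
    LinkedToPair p x i (i + k) (n - k) := by
  have hi := add_natCast_add_natCast_sub i h.lt.le
  have := h.symm.linkedToPair_fst (x := x) (by rwa [hi, openSegment_symm])
  rwa [hi] at this

end IsSplit

lemma IsCCW.exists_isSplit_apex (hp : IsCCW p) (hn : 4 ≤ n) (j : ZMod n) :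
    ∃ i k, IsSplit p i k ∧ (∃ m < k, j = i + (m : ℕ)) ∧
      (j = i ∧ Visible p (i + k) (j + 1) ∨ j + 1 = i + k ∧ Visible p i j) := by
  obtain ⟨w, hwj, hwj', hv, hv'⟩ := hp.exists_apex j
  rcases ne_or_eq j (w + 1) with hprev | rfl
  · have h := hp.isSplit (hv.isDiagonal hwj hwj' hprev)
    have hw : j + ((w - j).val : ZMod n) = w := by rw [ZMod.natCast_zmod_val, add_sub_cancel]
    exact ⟨j, _, h, ⟨0, by linarith [h.two_le], by simp⟩, .inl ⟨rfl, hw.symm ▸ hv'.symm⟩⟩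
  · have hnext : w ≠ w + 1 + 1 + 1 := fun h => by
      have h3 : ((3 : ℕ) : ZMod n) = 0 := by
        push_cast
        linear_combination -h
      exact natCast_ne_zero three_ne_zero hn h3
    have h := hp.isSplit (hv'.isDiagonal hwj' hnext (by simpa using hwj.symm)).symm
    have hw : w + ((w + 1 + 1 - w).val : ZMod n) = w + 1 + 1 := by
      rw [ZMod.natCast_zmod_val, add_sub_cancel]
    exact ⟨w, _, h, ⟨1, by linarith [h.two_le], by simp⟩, .inr ⟨hw.symm, .edge w⟩⟩

lemma IsSplit.linkedToPair_apex (h : IsSplit p i k)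
    (hx : LinkedToPair p x i (i + k) (n - k))
    (hj : j = i ∧ Visible p (i + k) (j + 1) ∨ j + 1 = i + k ∧ Visible p i j) :
    LinkedToPair p x j (j + 1) (n - 1) := by
  have := h.two_le
  have := h.lt
  refine LinkedToPair.mono (m := n - k + 1) ?_ (by lia)
  rcases hj with ⟨rfl, hv⟩ | ⟨hj, hv⟩
  · exact hx.step (.edge j) hv
  · rw [← hj] at hx
    exact (hx.symm.step (.edge_symm j) hv).symm

theorem IsCCW.linkedToPair (hp : IsCCW p) (hx : x ∈ inside p) (j : ZMod n) :
    LinkedToPair p x j (j + 1) (n - 1) := by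
  revert x j
  refine hp.split_induction (motive := fun n _ p => ∀ {x}, x ∈ inside p → ∀ j,
    LinkedToPair p x j (j + 1) (n - 1)) ?_ ?_
  · intro p hp x hx j
    exact .of_openSegment (hp.openSegment_subset_inside_triangle hx j)
      (hp.openSegment_subset_inside_triangle hx (j + 1))
  · intro n _ p hn hp ih x hx j
    obtain ⟨i, k, h, ⟨m, hm, hj⟩, hapex⟩ := hp.exists_isSplit_apex hn j
    rcases h.mem_inside_cases hx with hx | hx | hx
    · have := (h.linkedToPair_of_subPolygon (ih i k h hx m)).mono (Nat.le_sub_one_of_lt h.lt)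
      rwa [arc_natCast i hm.le, arc_natCast_add_one i hm, ← hj] at this
    · exact h.linkedToPair_apex (h.linkedToPair_snd (.inl (ih _ _ h.symm hx _))) hapex
    · exact h.linkedToPair_apex (h.linkedToPair_snd (.inr hx)) hapex

lemma IsSplit.edist_le_of_mem (h : IsSplit p i k) (hx : x ∈ inside p) (hy : y ∈ inside p)
    (hxfst : x ∈ inside (subPolygon p i k) ∨ x ∈ openSegment ℝ (p (i + k)) (p i))
    (hysnd : y ∈ inside (subPolygon p (i + k) (n - k)) ∨ y ∈ openSegment ℝ (p (i + k)) (p i)) :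
    (segmentGraph (inside p)).edist x y ≤ (n / 2 : ℕ) := by
  have hxi := h.linkedToPair_fst (hxfst.imp_left fun hx => h.isCCW_subPolygon.linkedToPair hx k)
  have hyi := h.linkedToPair_snd
    (hysnd.imp_left fun hy => h.symm.isCCW_subPolygon.linkedToPair hy (n - k : ℕ))
  have := hxi.symm.edist_le h.isCCW hx hy hyi
  rwa [Nat.add_sub_cancel' h.lt.le] at this

theorem IsCCW.edist_le (hp : IsCCW p) (hx : x ∈ inside p) (hy : y ∈ inside p) :
    (segmentGraph (inside p)).edist x y ≤ (n / 2 : ℕ) := by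
  revert x y
  refine hp.split_induction (motive := fun n _ p => ∀ {x y}, x ∈ inside p → y ∈ inside p →
    (segmentGraph (inside p)).edist x y ≤ (n / 2 : ℕ)) ?_ ?_
  · intro p hp x y hx hy
    exact edist_segmentGraph_le_one (hp.convex_inside_triangle.segment_subset hx hy)
  · intro n _ p hn hp ih x y hx hy
    have same {i : ZMod n} {k : ℕ} (h : IsSplit p i k) (hx : x ∈ inside (subPolygon p i k))
        (hy : y ∈ inside (subPolygon p i k)) :
        (segmentGraph (inside p)).edist x y ≤ (n / 2 : ℕ) :=
      (SimpleGraph.edist_anti (segmentGraph_mono h.inside_subPolygon_subset)).trans <|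
        (ih i k h hx hy).trans (Nat.cast_le.2 (Nat.div_le_div_right h.lt))
    obtain ⟨i, k, h, -⟩ := hp.exists_isSplit hn 0
    rcases h.mem_inside_cases hx, h.mem_inside_cases hy with ⟨hx' | hx' | hx', hy' | hy' | hy'⟩
    · exact same h hx' hy'
    · exact h.edist_le_of_mem hx hy (.inl hx') (.inl hy')
    · exact h.edist_le_of_mem hx hy (.inl hx') (.inr hy')
    · exact SimpleGraph.edist_comm.trans_le (h.edist_le_of_mem hy hx (.inl hy') (.inl hx'))
    · exact same h.symm hx' hy'
    · exact SimpleGraph.edist_comm.trans_le (h.edist_le_of_mem hy hx (.inr hy') (.inl hx'))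
    · exact SimpleGraph.edist_comm.trans_le (h.edist_le_of_mem hy hx (.inl hy') (.inr hx'))
    · exact h.edist_le_of_mem hx hy (.inr hx') (.inl hy')
    · exact h.edist_le_of_mem hx hy (.inr hx') (.inr hy')

end Counting

/-! ### The Jordan interior -/

section Jordan

variable {n : ℕ} [NeZero n] {p : ZMod n → ℂ} {x y : ℂ}

lemma IsSimple.edist_le (hp : IsSimple p) (hx : x ∈ inside p) (hy : y ∈ inside p) :
    (segmentGraph (inside p)).edist x y ≤ (n / 2 : ℕ) := by
  rcases hp.isCCW_or_isCCW_reverse with h | h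
  · exact h.edist_le hx hy
  · rw [← inside_reverse] at hx hy ⊢
    exact h.edist_le hx hy

lemma IsCCW.mem_leftSide_reverse (hp : IsCCW p) (hx : x ∉ boundary p) (hin : x ∉ inside p) :
    x ∈ leftSide (reverse p) :=
  (mem_leftSide_or_mem_leftSide_reverse hx).resolve_left (hp.inside_eq_leftSide ▸ hin)

lemma IsCCW.not_isBounded_connectedComponentIn (hp : IsCCW p) (hx : x ∉ boundary p)
    (hin : x ∉ inside p) : ¬Bornology.IsBounded (connectedComponentIn (boundary p)ᶜ x) := by
  intro hbdd
  refine NormedSpace.unbounded_univ ℝ ℂ <|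
    ((isBounded_convexHull_range p).union hbdd).subset fun y _ => ?_
  by_cases hy : y ∈ convexHull ℝ (range p)
  · exact .inl hy
  have hyb : y ∉ boundary p := fun h => hy (boundary_subset_convexHull p h)
  have hcomp := connectedComponentIn_eq_of_mem_leftSide hp.toIsSimple.reverse
    (hp.mem_leftSide_reverse hx hin)
    (hp.mem_leftSide_reverse hyb fun h => hy (inside_subset_convexHull p h))
  rw [boundary_reverse] at hcomp
  exact .inr (hcomp ▸ mem_connectedComponentIn hyb)

lemma IsSimple.mem_inside_iff (hp : IsSimple p) :
    x ∈ inside p ↔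
      x ∉ boundary p ∧ Bornology.IsBounded (connectedComponentIn (boundary p)ᶜ x) := by
  refine ⟨fun hx => ⟨hx.1, (isBounded_convexHull_range p).subset
    ((connectedComponentIn_subset_inside hx).trans (inside_subset_convexHull p))⟩,
    fun ⟨hx, hbdd⟩ => ?_⟩
  by_contra hin
  rcases hp.isCCW_or_isCCW_reverse with h | h
  · exact h.not_isBounded_connectedComponentIn hx hin hbdd
  · rw [← boundary_reverse] at hx hbdd
    rw [← inside_reverse] at hin
    exact h.not_isBounded_connectedComponentIn hx hin hbdd

end Jordan

section Transport

variable {n : ℕ} {q : ZMod n → ℂ} {x y : ℂ}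

/-- The identification of `ℂ`, where the polygons of this development live, with the plane. -/
noncomputable def toPlane : ℂ ≃ₗᵢ[ℝ] Plane := Complex.orthonormalBasisOneI.repr

lemma image_segment_toPlane (x y : ℂ) :
    toPlane '' segment ℝ x y = segment ℝ (toPlane x) (toPlane y) :=
  image_segment ℝ toPlane.toLinearEquiv.toLinearMap.toAffineMap x y

lemma polyEdge_toPlane (q : ZMod n → ℂ) (i : ZMod n) :
    polyEdge (toPlane ∘ q) i = toPlane '' edge q i :=
  (image_segment_toPlane _ _).symm

lemma polyBody_toPlane (q : ZMod n → ℂ) : polyBody (toPlane ∘ q) = toPlane '' boundary q := by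
  simp only [polyBody, boundary, image_iUnion, polyEdge_toPlane]

lemma isSimple_of_isSimplePolygon (h : IsSimplePolygon (toPlane ∘ q)) : IsSimple q := by
  refine ⟨h.three_le, h.inj.of_comp, fun {i j x} hij hi hj => ?_⟩
  have hmem : ∀ {k}, x ∈ edge q k → toPlane x ∈ polyEdge (toPlane ∘ q) k := fun hk =>
    polyEdge_toPlane q _ ▸ mem_image_of_mem _ hk
  by_cases hnext : j = i + 1
  · subst hnext
    exact .inl ⟨rfl, toPlane.injective ((h.consec i).subset ⟨hmem hi, hmem hj⟩)⟩
  by_cases hprev : i = j + 1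
  · subst hprev
    exact .inr ⟨rfl, toPlane.injective ((h.consec j).subset ⟨hmem hj, hmem hi⟩)⟩
  exact ((h.nonconsec i j hij.symm hnext hprev).subset ⟨hmem hi, hmem hj⟩).elim

lemma IsSimple.intP_polyBody_toPlane [NeZero n] (hq : IsSimple q) :
    intP (polyBody (toPlane ∘ q)) = toPlane '' inside q := by
  have hcompl : (polyBody (toPlane ∘ q))ᶜ = toPlane '' (boundary q)ᶜ := by
    rw [polyBody_toPlane, image_compl_eq toPlane.bijective]
  ext a
  obtain ⟨x, rfl⟩ := toPlane.surjective a
  rw [toPlane.injective.mem_set_image, hq.mem_inside_iff, intP, mem_ofPred_eq, ← mem_compl_iff,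
    ← mem_compl_iff, hcompl, toPlane.injective.mem_set_image]
  refine and_congr_right fun hx => ?_
  have himage : connectedComponentIn (toPlane '' (boundary q)ᶜ) (toPlane x) =
      toPlane '' connectedComponentIn (boundary q)ᶜ x :=
    (toPlane.toHomeomorph.image_connectedComponentIn hx).symm
  rw [himage]
  refine ⟨fun h => ?_, toPlane.lipschitz.isBounded_image⟩
  exact (toPlane.antilipschitz.isBounded_preimage h).subset (subset_preimage_image _ _)

lemma exists_polyPath_toPlane {S : Set ℂ} {m : ℕ} (h : (segmentGraph S).edist x y ≤ m) :
    ∃ k ≤ m, PolyPath (toPlane '' S) (toPlane x) (toPlane y) k := by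
  obtain ⟨w, hw⟩ := SimpleGraph.exists_walk_of_edist_ne_top
    (ne_top_of_le_ne_top (ENat.natCast_ne_top m) h)
  rw [← hw, Nat.cast_le] at h
  refine ⟨w.length, h, fun i => toPlane (w.getVert i), by simp, by simp, fun i => ?_⟩
  rw [← image_segment_toPlane]
  exact image_mono (w.adj_getVert_succ i.isLt).2

end Transport

end PlanePolygon

theorem stmt16 {n : ℕ} (p : ZMod n → Plane) (hP : IsSimplePolygon p) :
    ∀ a ∈ intP (polyBody p), ∀ b ∈ intP (polyBody p),
      ∃ k ≤ n / 2, PolyPath (intP (polyBody p)) a b k := by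
  obtain ⟨q, rfl⟩ : ∃ q, PlanePolygon.toPlane ∘ q = p :=
    PlanePolygon.toPlane.surjective.comp_left p
  have hq := PlanePolygon.isSimple_of_isSimplePolygon hP
  have : NeZero n := ⟨by linarith [hP.three_le]⟩
  rw [hq.intP_polyBody_toPlane]
  rintro _ ⟨x, hx, rfl⟩ _ ⟨y, hy, rfl⟩
  exact PlanePolygon.exists_polyPath_toPlane (hq.edist_le hx hy)
end
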